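/- For every integer d ≥ 1 there exist a constant c = c(d) < ∞ and a translation-equivariant matching rule Φ such that for all real r ≥ 2, ℙ(Z_Φ > r) ≤ c (log r)^4 r^{−β}, where β = β(d) = 2d/(d+4). -/

import Mathlib

open MeasureTheory ENNReal

noncomputable section

/-- Sites: the lattice `ℤ^d`. -/
abbrev Site (d : ℕ) := Fin d → ℤ

/-- Configurations: elements of `{0,1}^{ℤ^d}`, encoded with `Bool`. -/
abbrev Config (d : ℕ) := Site d → Bool

/-- The translation `θ^z` acting on configurations: `(θ^z γ)(x) = γ(x - z)`. -/
def shiftCfg {d : ℕ} (z : Site d) (γ : Config d) : Config d := fun x => γ (x - z)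

/-- `φ` is a matching on `γ`: an involutive bijection matching ones to zeros. -/
def IsMatching {d : ℕ} (γ : Config d) (φ : Site d → Site d) : Prop :=
  Function.Bijective φ ∧ (∀ x, φ (φ x) = x) ∧ ∀ x, γ (φ x) = !(γ x)

/-- `Φ` is a matching rule with respect to the measure `P`. -/
def IsMatchingRule {d : ℕ} (P : Measure (Config d)) (Φ : Config d → Site d → Site d) : Prop :=
  (∀ x : Site d, Measurable fun γ => Φ γ x) ∧ ∀ᵐ γ ∂P, IsMatching γ (Φ γ)

/-- `Φ` is translation-equivariant with respect to `P`. -/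
def IsEquivariant {d : ℕ} (P : Measure (Config d)) (Φ : Config d → Site d → Site d) : Prop :=
  ∀ z x : Site d, ∀ᵐ γ ∂P, Φ (shiftCfg z γ) (x + z) = Φ γ x + z

/-- `P` is the product measure with i.i.d. Bernoulli(1/2) coordinates, characterized by
its values on cylinder events. -/
def IsBernoulliHalfProduct {d : ℕ} (P : Measure (Config d)) : Prop :=
  IsProbabilityMeasure P ∧
    ∀ (s : Finset (Site d)) (f : Site d → Bool),
      P {γ | ∀ x ∈ s, γ x = f x} = (1 / 2 : ℝ≥0∞) ^ s.card

/-- `Z_Φ(γ) = ‖Φ(γ, 0)‖`, the `ℓ^∞` distance from the origin to its partner. -/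
def ZΦ {d : ℕ} (Φ : Config d → Site d → Site d) (γ : Config d) : ℝ := ‖Φ γ 0‖

/-- Embedding of the lattice in `ℝ^d`. -/
def toR {d : ℕ} (x : Site d) : Fin d → ℝ := fun i => (x i : ℝ)

/-- The first standard basis vector `e₁`. -/
def e1 (d : ℕ) : Site d := fun i => if (i : ℕ) = 0 then 1 else 0

/-- `x` is a `k`-seed for `γ`. -/
def IsSeed {d : ℕ} (γ : Config d) (k : ℕ) (x : Site d) : Prop :=
  γ x = true ∧ ∀ n : ℕ, 1 ≤ n → n ≤ k - 1 → γ (x + (n : ℤ) • e1 d) = false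

/-- `r_k = (2^k k²)^{1/d} + 1/2`. -/
def rr (d k : ℕ) : ℝ := ((2 : ℝ) ^ k * (k : ℝ) ^ 2) ^ ((d : ℝ)⁻¹) + 1 / 2

/-- The shift `s_k = ⌊100 r_k⌋ e₁`. -/
def ss (d k : ℕ) : Site d := ⌊(100 : ℝ) * rr d k⌋ • e1 d

/-- `W_k(γ)`: the union of all `k`-cutters. -/
def cutters {d : ℕ} (γ : Config d) (k : ℕ) : Set (Fin d → ℝ) :=
  ⋃ x ∈ {x : Site d | IsSeed γ k (x - ss d k)}, {y : Fin d → ℝ | ‖y - toR x‖ = rr d k}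

/-- The `k`-blob containing the point `p ∈ ℝ^d`: the connected component of `p` in the
complement of all `j`-cutters with `j > k`. -/
def blob {d : ℕ} (γ : Config d) (k : ℕ) (p : Fin d → ℝ) : Set (Fin d → ℝ) :=
  connectedComponentIn (⋃ j ∈ {j : ℕ | k < j}, cutters γ j)ᶜ p

/-- The `k`-clump of a site `x`: the lattice points of the `k`-blob containing `x`. -/
def clump {d : ℕ} (γ : Config d) (k : ℕ) (x : Site d) : Set (Site d) :=
  {y : Site d | toR y ∈ blob γ k (toR x)}

/-- The event `E_k`: the cube `S(-s_k, r_k - 1)` contains a `k`-seed. -/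
def Ek (d k : ℕ) : Set (Config d) :=
  {γ | ∃ y : Site d, IsSeed γ k y ∧ ‖toR y + toR (ss d k)‖ ≤ rr d k - 1}

/-- A `k`-seed lying in the annulus `S(-s_k, r_k + s) \ S(-s_k, r_k - s)`. -/
def SeedInAnnulus {d : ℕ} (γ : Config d) (k : ℕ) (s : ℝ) (y : Site d) : Prop :=
  IsSeed γ k y ∧ ‖toR y + toR (ss d k)‖ ≤ rr d k + s ∧ rr d k - s < ‖toR y + toR (ss d k)‖

/-- The event `U_k(s)`: `S(-s_k, r_k + s) \ S(-s_k, r_k - s)` contains a `k`-seed. -/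
def Uk (d : ℕ) (k : ℕ) (s : ℝ) : Set (Config d) :=
  {γ | ∃ y : Site d, SeedInAnnulus γ k s y}

/-- The event `C_k(s) = ∪_{j ≥ k} U_j(s)`. -/
def Ck (d : ℕ) (k : ℕ) (s : ℝ) : Set (Config d) :=
  {γ | ∃ j : ℕ, k ≤ j ∧ γ ∈ Uk d j s}

/-- `±1`-valued spin `2γ(x) - 1`. -/
def pm1 {d : ℕ} (γ : Config d) (y : Site d) : ℤ := if γ y then 1 else -1

/-- `Φ` matches maximally within clumps: a.s. every clump is finite and the number of
sites of each `k`-clump `L` matched outside `L` equals `|Σ_{x ∈ L} (2γ(x) - 1)|`. -/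
def MatchesMaximally {d : ℕ} (P : Measure (Config d))
    (Φ : Config d → Site d → Site d) : Prop :=
  ∀ᵐ γ ∂P, ∀ k : ℕ, 1 ≤ k → ∀ x : Site d,
    (clump γ k x).Finite ∧
      (({y ∈ clump γ k x | Φ γ y ∉ clump γ k x}.ncard : ℤ)
        = |∑ᶠ y ∈ clump γ k x, pm1 γ y|)

/-!
Cells of sites are grown by merging: at level `n` the center of each cell jumps, within distance
`2 ^ n`, to a site starting a long run of *cuts*, if it finds one, and cells whose centers meet are
merged. Ones are matched to zeros greedily inside the cells, level by level, so that the number of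
sites of a cell left unmatched is at most the absolute value of the sum `S` of its spins.

Cuts are local patterns on lines in direction `e₁` that survive the reversal of all coins between
two consecutive cuts. Given the cuts, hence the cells, the spins of different segments between cuts
are therefore uncorrelated. Mass transport turns the second moment of `S`, over the cell centered at
the origin, into the expected product of the spin of the origin with the sum of the spins of its
cell, to which only the segment of the origin contributes, so `E S ^ 2` is bounded uniformly in the
level. By mass transport and the Cauchy–Schwarz inequality, the probability that the origin is
unmatched after level `n` is then at most of the order of the square root of the probability that
the origin is a center. As there are about `2 ^ (d * n)` places to jump to, runs may be chosen so
long that the latter is of order `2 ^ (-a * n)`, for any `a < d`. Hence tails of order `r ^ (-β)`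
are possible for every `β < d / 2`, and `2 * d / (d + 4) < d / 2`.
-/

/-- The joint law of independent fair coins indexed by `ι`. -/
def fairCoins (ι : Type*) : Measure (ι → Bool) :=
  Measure.infinitePi fun _ => (PMF.uniformOfFintype Bool).toMeasure

section FairCoins

open Finset

variable {ι κ ω : Type*}

instance : IsProbabilityMeasure (fairCoins ι) := by
  unfold fairCoins
  infer_instance

theorem cylinder_eq_pi (s : Finset ι) (f : ι → Bool) :
    {γ : ι → Bool | ∀ x ∈ s, γ x = f x} = (s : Set ι).pi fun x => {f x} := by
  ext γ
  simp [Set.mem_pi]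

theorem measurableSet_cylinder (s : Finset ι) (f : ι → Bool) :
    MeasurableSet {γ : ι → Bool | ∀ x ∈ s, γ x = f x} := by
  rw [cylinder_eq_pi]
  exact .pi s.countable_toSet fun x _ => measurableSet_singleton (f x)

theorem fairCoins_cylinder (s : Finset ι) (f : ι → Bool) :
    fairCoins ι {γ | ∀ x ∈ s, γ x = f x} = (1 / 2) ^ #s := by
  rw [cylinder_eq_pi, fairCoins, Measure.infinitePi_pi _ fun x _ => measurableSet_singleton (f x)]
  simp

theorem map_restrict_singleton {μ : Measure (ι → Bool)}
    (hμ : ∀ (s : Finset ι) (f : ι → Bool), μ {γ | ∀ x ∈ s, γ x = f x} = (1 / 2) ^ #s)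
    (s : Finset ι) (g : s → Bool) : μ.map s.restrict {g} = (1 / 2) ^ #s := by
  classical
  rw [Measure.map_apply (Finset.measurable_restrict s) (measurableSet_singleton g),
    ← hμ s fun x => if h : x ∈ s then g ⟨x, h⟩ else false]
  congr 1
  ext γ
  simp +contextual [funext_iff, Finset.restrict]

theorem eq_fairCoins {μ : Measure (ι → Bool)}
    (hμ : ∀ (s : Finset ι) (f : ι → Bool), μ {γ | ∀ x ∈ s, γ x = f x} = (1 / 2) ^ #s) :
    μ = fairCoins ι := by
  have h_lim : IsProjectiveLimit μ fun s : Finset ι => (fairCoins ι).map s.restrict := fun s =>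
    Measure.ext_of_singleton fun g => by
      rw [map_restrict_singleton hμ, map_restrict_singleton fairCoins_cylinder]
  exact h_lim.unique fun s => rfl

theorem measurePreserving_comp_injective {b : κ → ι} (hb : Function.Injective b) :
    MeasurePreserving (fun (γ : ι → Bool) y => γ (b y)) (fairCoins ι) (fairCoins κ) := by
  classical
  have h_meas : Measurable fun (γ : ι → Bool) y => γ (b y) := by fun_prop
  refine ⟨h_meas, eq_fairCoins fun s f => ?_⟩
  rw [Measure.map_apply h_meas (measurableSet_cylinder s f), ← card_map ⟨b, hb⟩,
    ← fairCoins_cylinder _ (Function.extend b f default)]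
  simp [hb.extend_apply]

theorem measurePreserving_bxor (f : ι → Bool) :
    MeasurePreserving (fun (γ : ι → Bool) x => γ x ^^ f x) (fairCoins ι) (fairCoins ι) := by
  have h_meas : Measurable fun (γ : ι → Bool) x => γ x ^^ f x :=
    measurable_pi_lambda _ fun x =>
      (measurable_of_countable fun c : Bool => c ^^ f x).comp (measurable_pi_apply x)
  refine ⟨h_meas, eq_fairCoins fun s g => ?_⟩
  rw [Measure.map_apply h_meas (measurableSet_cylinder s g),
    ← fairCoins_cylinder s fun x => g x ^^ f x]
  congr 1
  ext γ
  refine forall₂_congr fun x _ => ?_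
  change (γ x ^^ f x) = g x ↔ γ x = (g x ^^ f x)
  cases f x <;> simp

theorem fairCoins_forall_row [Finite ω] [Fintype κ] (p : (ω → Bool) → Prop) :
    fairCoins (κ × ω) {g | ∀ k, p fun w => g (k, w)} =
      fairCoins ω {g | p g} ^ Fintype.card κ := by
  have h_pi : {g : κ → ω → Bool | ∀ k, p (g k)} = Set.univ.pi fun _ => {g | p g} := by
    ext g
    simp
  calc fairCoins (κ × ω) {g | ∀ k, p fun w => g (k, w)}
      = (fairCoins (κ × ω)).map (MeasurableEquiv.curry κ ω Bool)
          (Set.univ.pi fun _ => {g | p g}) := by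
        rw [MeasurableEquiv.map_apply, ← h_pi]
        rfl
    _ = fairCoins ω {g | p g} ^ Fintype.card κ := by
        rw [fairCoins, Measure.infinitePi_map_curry fun _ _ => _,
          Measure.infinitePi_pi_univ _ fun _ => .of_discrete]
        simp [fairCoins]

theorem fairCoins_forall_pattern [Finite ω] [Fintype κ] {b : κ → ω → ι}
    (hb : Function.Injective b.uncurry) (p : (ω → Bool) → Prop) :
    fairCoins ι {γ | ∀ k, p fun w => γ (b k w)} = fairCoins ω {g | p g} ^ Fintype.card κ := by
  rw [← fairCoins_forall_row, ← (measurePreserving_comp_injective hb).measure_preimage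
    (MeasurableSet.of_discrete).nullMeasurableSet]
  rfl

theorem fairCoins_apply [Fintype κ] [DecidableEq κ] (p : (κ → Bool) → Prop) [DecidablePred p] :
    fairCoins κ {g | p g} = #{g | p g} * (1 / 2) ^ Fintype.card κ := by
  have h_single (g : κ → Bool) : fairCoins κ {g} = (1 / 2) ^ Fintype.card κ := by
    rw [← card_univ, ← fairCoins_cylinder univ g]
    simp [← funext_iff]
  rw [← coe_filter_univ, ← sum_measure_singleton]
  simp [h_single]

end FairCoins

theorem IsBernoulliHalfProduct.eq_fairCoins {d : ℕ} {P : Measure (Config d)}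
    (hP : IsBernoulliHalfProduct P) : P = fairCoins (Site d) :=
  _root_.eq_fairCoins hP.2

section Cuts

variable {V : Type*} [AddCommGroup V] (e : V)

/-- A cut of `γ` at `x` in direction `e`, thought of as lying between `x` and `x + e`: on the sites
`x - e, x, …, x + 3e` the configuration changes value between `x + e` and `x + 2e`, but neither
between `x - e` and `x` nor between `x + 2e` and `x + 3e`. The values at `x` and `x + e` are
unrelated, so that changing every coin beyond a cut keeps the cut. -/
def IsCut (γ : V → Bool) (x : V) : Prop :=
  γ (x - e) = γ x ∧ γ (x + e) ≠ γ (x + e + e) ∧ γ (x + e + e) = γ (x + e + e + e)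

/-- The set of all cuts of `γ` in direction `e`. -/
def cuts (γ : V → Bool) : Set V := {x | IsCut e γ x}

variable {e}

theorem IsCut.bxor {γ f : V → Bool} {x : V} (hx : IsCut e γ x)
    (hf : ∀ y, f y ≠ f (y + e) → IsCut e γ y) : IsCut e (fun y => γ y ^^ f y) x := by
  have h_before : f (x - e) = f x := by
    by_contra h
    have h_cut := hf (x - e) (by simpa using h)
    simp only [IsCut, sub_add_cancel] at h_cut
    exact hx.2.1 h_cut.2.2
  have h_change : f (x + e) = f (x + e + e) := by
    by_contra h
    exact (hf _ h).2.1 hx.2.2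
  have h_after : f (x + e + e) = f (x + e + e + e) := by
    by_contra h
    have h_cut := hf _ h
    simp only [IsCut, add_sub_cancel_right] at h_cut
    exact hx.2.1 h_cut.1
  unfold IsCut at hx ⊢
  simpa [h_before, h_change, h_after] using hx

theorem cuts_bxor {γ f : V → Bool} (hf : ∀ y, f y ≠ f (y + e) → y ∈ cuts e γ) :
    cuts e (fun y => γ y ^^ f y) = cuts e γ := by
  ext x
  have h_forward : ∀ y ∈ cuts e γ, y ∈ cuts e fun y => γ y ^^ f y := fun y hy => IsCut.bxor hy hf
  refine ⟨fun hx => ?_, h_forward x⟩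
  have h_flip_twice : IsCut e (fun y => (γ y ^^ f y) ^^ f y) x :=
    IsCut.bxor (show IsCut e (fun y => γ y ^^ f y) x from hx) fun y hy => h_forward y (hf y hy)
  simp only [Bool.xor_assoc, Bool.xor_self, Bool.xor_false] at h_flip_twice
  exact h_flip_twice

theorem cuts_comp_sub (γ : V → Bool) (z : V) :
    cuts e (fun x => γ (x - z)) = {x | x - z ∈ cuts e γ} := by
  ext x
  simp only [cuts, IsCut, Set.mem_ofPred_eq, sub_right_comm _ e, add_sub_right_comm _ e]

theorem measurableSet_mem_cuts (x : V) : MeasurableSet {γ : V → Bool | x ∈ cuts e γ} := by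
  have h_eq (y z : V) : MeasurableSet {γ : V → Bool | γ y = γ z} :=
    measurableSet_eq_fun (measurable_pi_apply y) (measurable_pi_apply z)
  exact (h_eq _ _).inter ((h_eq _ _).compl.inter (h_eq _ _))

variable (e) in
/-- A run of `k` consecutive cuts in the set `C`, spaced by `5e`, the first of them at `x`. -/
def HasCutRun (C : Set V) (k : ℕ) (x : V) : Prop := ∀ j : Fin k, x + (5 * (j : ℤ)) • e ∈ C

theorem measurableSet_hasCutRun (k : ℕ) (x : V) :
    MeasurableSet {γ : V → Bool | HasCutRun e (cuts e γ) k x} := by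
  simp only [HasCutRun, Set.ofPred_forall]
  exact .iInter fun j => measurableSet_mem_cuts _

end Cuts

section CutProbabilities

/-- The pattern that a configuration shows, on five consecutive sites, at a cut. -/
def CutPattern (g : Fin 5 → Bool) : Prop := g 0 = g 1 ∧ g 2 ≠ g 3 ∧ g 3 = g 4

instance : DecidablePred CutPattern := fun g => by
  unfold CutPattern
  infer_instance

theorem fairCoins_cutPattern : fairCoins (Fin 5) {g | CutPattern g} = 1 / 8 := by
  have h_card : Finset.card {g : Fin 5 → Bool | CutPattern g} = 4 := by decide
  rw [fairCoins_apply, h_card, Fintype.card_fin,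
    ← ENNReal.toReal_eq_toReal_iff' (by finiteness) (by finiteness)]
  norm_num

theorem fairCoins_not_cutPattern : fairCoins (Fin 5) {g | ¬ CutPattern g} = 7 / 8 := by
  have h_card : Finset.card {g : Fin 5 → Bool | ¬ CutPattern g} = 28 := by decide
  rw [fairCoins_apply, h_card, Fintype.card_fin,
    ← ENNReal.toReal_eq_toReal_iff' (by finiteness) (by finiteness)]
  norm_num

variable {V κ : Type*} [AddCommGroup V] {e : V}

theorem cutPattern_iff {γ : V → Bool} {x : V} :
    CutPattern (fun w => γ (x + ((w : ℤ) - 1) • e)) ↔ x ∈ cuts e γ := by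
  have h_three : (3 : ℤ) • e = e + (e + e) := by abel
  simp [CutPattern, cuts, IsCut, two_zsmul, h_three, add_assoc, sub_eq_add_neg]

theorem fairCoins_hasCutRun (he : ¬ IsOfFinAddOrder e) (k : ℕ) (x : V) :
    fairCoins V {γ | HasCutRun e (cuts e γ) k x} = (1 / 8) ^ k := by
  have h_inj : Function.Injective (Function.uncurry fun (j : Fin k) (w : Fin 5) =>
      x + (5 * (j : ℤ)) • e + ((w : ℤ) - 1) • e) := by
    rintro ⟨j, w⟩ ⟨j', w'⟩ h
    simp only [Function.uncurry, add_assoc, ← add_smul] at h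
    have h_coeff := injective_zsmul_iff_not_isOfFinAddOrder.2 he (add_left_cancel h)
    ext <;> grind
  simp only [HasCutRun, ← cutPattern_iff]
  rw [fairCoins_forall_pattern h_inj, fairCoins_cutPattern, Fintype.card_fin]

theorem fairCoins_forall_notMem_cuts [Fintype κ] (he : ¬ IsOfFinAddOrder e) {f : κ → ℤ}
    (hf : Pairwise fun i j => 5 ≤ |f i - f j|) :
    fairCoins V {γ | ∀ i, f i • e ∉ cuts e γ} = (7 / 8) ^ Fintype.card κ := by
  have h_inj : Function.Injective (Function.uncurry fun (i : κ) (w : Fin 5) =>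
      f i • e + ((w : ℤ) - 1) • e) := by
    rintro ⟨i, w⟩ ⟨i', w'⟩ h
    simp only [Function.uncurry, ← add_smul] at h
    have h_coeff := injective_zsmul_iff_not_isOfFinAddOrder.2 he h
    have h_index : i = i' := by
      by_contra h_ne
      have := hf h_ne
      grind
    grind
  simp only [← cutPattern_iff]
  rw [fairCoins_forall_pattern h_inj fun g => ¬ CutPattern g, fairCoins_not_cutPattern]

theorem ae_exists_mem_cuts (he : ¬ IsOfFinAddOrder e) {f : ℕ → ℤ}
    (hf : Pairwise fun i j => 5 ≤ |f i - f j|) :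
    ∀ᵐ γ ∂fairCoins V, ∃ i, f i • e ∈ cuts e γ := by
  have h_lim : Filter.Tendsto (fun m : ℕ => (7 / 8 : ℝ≥0∞) ^ m) Filter.atTop (nhds 0) :=
    ENNReal.tendsto_pow_atTop_nhds_zero_of_lt_one
      ((ENNReal.div_lt_iff (by norm_num) (by norm_num)).2 (by norm_num))
  rw [ae_iff]
  refine le_antisymm (ge_of_tendsto' h_lim fun m => ?_) zero_le
  have h_first : fairCoins V {γ | ∀ i : Fin m, f i • e ∉ cuts e γ} = (7 / 8) ^ m := by
    rw [fairCoins_forall_notMem_cuts he fun i j hij => hf (Fin.val_injective.ne hij),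
      Fintype.card_fin]
  rw [← h_first]
  exact measure_mono fun γ hγ i hi => hγ ⟨i, hi⟩

theorem fairCoins_forall_not_hasCutRun [Fintype κ] {k : ℕ} {b : κ → V}
    (hb : Function.Injective fun p : κ × Fin k × Fin 5 =>
      b p.1 + (5 * (p.2.1 : ℤ)) • e + ((p.2.2 : ℤ) - 1) • e) :
    fairCoins V {γ | ∀ i, ¬ HasCutRun e (cuts e γ) k (b i)} =
      (1 - (1 / 8) ^ k) ^ Fintype.card κ := by
  have h_run : fairCoins (Fin k × Fin 5) {g | ∀ j, CutPattern fun w => g (j, w)} = (1 / 8) ^ k := by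
    rw [fairCoins_forall_row, fairCoins_cutPattern, Fintype.card_fin]
  simp only [HasCutRun, ← cutPattern_iff]
  rw [fairCoins_forall_pattern
    (b := fun i (q : Fin k × Fin 5) => b i + (5 * (q.1 : ℤ)) • e + ((q.2 : ℤ) - 1) • e) hb
    fun g => ¬ ∀ j, CutPattern fun w => g (j, w), ← h_run, ← prob_compl_eq_one_sub .of_discrete]
  rfl

end CutProbabilities

section Greedy

/-- The greedy pairing for candidate relations `C i`, processed in increasing order of `i`: the
pairs made at stage `i` are the candidates at `i` neither entry of which was paired before. -/
def GreedyPair {ι α β : Type*} [LinearOrder ι] [WellFoundedLT ι] (C : ι → α → β → Prop) (i : ι)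
    (x : α) (y : β) : Prop :=
  C i x y ∧ ∀ j < i, (∀ y', ¬ GreedyPair C j x y') ∧ ∀ x', ¬ GreedyPair C j x' y
termination_by wellFounded_lt.wrap i

variable {ι α β : Type*} [LinearOrder ι] [WellFoundedLT ι] {C : ι → α → β → Prop} {i j : ι}
  {x x' : α} {y y' : β}

theorem GreedyPair.candidate (h : GreedyPair C i x y) : C i x y := by
  rw [GreedyPair] at h
  exact h.1

theorem GreedyPair.not_left_of_lt (h : GreedyPair C i x y) (hji : j < i) :
    ¬ GreedyPair C j x y' := by
  rw [GreedyPair] at h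
  exact (h.2 j hji).1 y'

theorem GreedyPair.not_right_of_lt (h : GreedyPair C i x y) (hji : j < i) :
    ¬ GreedyPair C j x' y := by
  rw [GreedyPair] at h
  exact (h.2 j hji).2 x'

theorem GreedyPair.right_unique (hC : ∀ i, Relator.RightUnique (C i)) (h : GreedyPair C i x y)
    (h' : GreedyPair C j x y') : y = y' := by
  rcases lt_trichotomy i j with hij | rfl | hji
  · exact absurd h (h'.not_left_of_lt hij)
  · exact hC i h.candidate h'.candidate
  · exact absurd h' (h.not_left_of_lt hji)

theorem GreedyPair.left_unique (hC : ∀ i, Relator.LeftUnique (C i)) (h : GreedyPair C i x y)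
    (h' : GreedyPair C j x' y) : x = x' := by
  rcases lt_trichotomy i j with hij | rfl | hji
  · exact absurd h (h'.not_right_of_lt hij)
  · exact hC i h.candidate h'.candidate
  · exact absurd h' (h.not_right_of_lt hji)

theorem exists_greedyPair_of_candidate (h : C i x y) :
    ∃ j ≤ i, (∃ y', GreedyPair C j x y') ∨ ∃ x', GreedyPair C j x' y := by
  by_contra! h_none
  refine (h_none i le_rfl).1 y ?_
  rw [GreedyPair]
  exact ⟨h, fun j hj => h_none j hj.le⟩

theorem greedyPair_equiv {α' β' : Type*} {C' : ι → α' → β' → Prop} (f : α ≃ α') (g : β ≃ β')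
    (hC : ∀ i x y, C' i (f x) (g y) ↔ C i x y) (i : ι) (x : α) (y : β) :
    GreedyPair C' i (f x) (g y) ↔ GreedyPair C i x y := by
  induction i using WellFoundedLT.induction generalizing x y with
  | ind i ih =>
    rw [GreedyPair, GreedyPair, hC]
    refine and_congr_right' (forall₂_congr fun j hj => and_congr ?_ ?_)
    · exact g.surjective.forall.trans (forall_congr' fun y' => not_congr (ih j hj x y'))
    · exact f.surjective.forall.trans (forall_congr' fun x' => not_congr (ih j hj x' y))

theorem measurableSet_greedyPair {Ω : Type*} [MeasurableSpace Ω] [Countable ι] [Countable α]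
    [Countable β] {C : Ω → ι → α → β → Prop} (hC : ∀ i x y, MeasurableSet {ω | C ω i x y})
    (i : ι) (x : α) (y : β) : MeasurableSet {ω | GreedyPair (C ω) i x y} := by
  induction i using WellFoundedLT.induction generalizing x y with
  | ind i ih =>
    have h_unfold : {ω | GreedyPair (C ω) i x y} = {ω | C ω i x y} ∩
        ⋂ j, ⋂ _ : j < i, (⋂ y', {ω | GreedyPair (C ω) j x y'}ᶜ) ∩
          ⋂ x', {ω | GreedyPair (C ω) j x' y}ᶜ := by
      ext ω
      simp only [Set.mem_inter_iff, Set.mem_iInter, Set.mem_compl_iff, Set.mem_ofPred_eq]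
      rw [GreedyPair]
    rw [h_unfold]
    exact (hC i x y).inter <| .iInter fun j => .iInter fun hj =>
      (MeasurableSet.iInter fun y' => (ih j hj x y').compl).inter
        (.iInter fun x' => (ih j hj x' y).compl)

end Greedy

section Partner

variable {V : Type*} [AddCommGroup V] [Encodable V] {γ γ' : V → Bool} {R R' : ℕ → Setoid V}
  {m n : ℕ} {x y y' : V}

/-- The candidates for pairing a site of value `1` with one of value `0`: at stage `(n, k)`, in
lexicographic order, they are the pairs in a common class of `R n` whose difference is the `k`-th
element of the group. -/
def PairCandidate (γ : V → Bool) (R : ℕ → Setoid V) (i : ℕ ×ₗ ℕ) (x y : V) : Prop :=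
  γ x = true ∧ γ y = false ∧ R (ofLex i).1 x y ∧ Encodable.encode (y - x) = (ofLex i).2

theorem pairCandidate_leftUnique (i : ℕ ×ₗ ℕ) : Relator.LeftUnique (PairCandidate γ R i) :=
  fun _ _ _ h h' =>
    sub_right_injective (Encodable.encode_injective (h.2.2.2.trans h'.2.2.2.symm))

theorem pairCandidate_rightUnique (i : ℕ ×ₗ ℕ) : Relator.RightUnique (PairCandidate γ R i) :=
  fun _ _ _ h h' =>
    sub_left_injective (Encodable.encode_injective (h.2.2.2.trans h'.2.2.2.symm))

/-- The sites `x` and `y` are paired, in either order, when ones are matched to zeros greedily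
inside the classes of `R 0`, `R 1`, …, `R n` successively. -/
def IsPartner (γ : V → Bool) (R : ℕ → Setoid V) (n : ℕ) (x y : V) : Prop :=
  ∃ i, (ofLex i).1 ≤ n ∧
    (GreedyPair (PairCandidate γ R) i x y ∨ GreedyPair (PairCandidate γ R) i y x)

theorem IsPartner.symm (h : IsPartner γ R n x y) : IsPartner γ R n y x :=
  let ⟨i, hin, hi⟩ := h
  ⟨i, hin, hi.symm⟩

theorem IsPartner.apply_right (h : IsPartner γ R n x y) : γ y = !γ x := by
  obtain ⟨i, -, hi | hi⟩ := h <;> simp [hi.candidate.1, hi.candidate.2.1]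

theorem IsPartner.rel (hR : Monotone R) (h : IsPartner γ R n x y) : R n x y := by
  obtain ⟨i, hin, hi | hi⟩ := h
  · exact hR hin hi.candidate.2.2.1
  · exact (R n).symm (hR hin hi.candidate.2.2.1)

theorem IsPartner.unique (h : IsPartner γ R m x y) (h' : IsPartner γ R n x y') : y = y' := by
  obtain ⟨i, -, hi | hi⟩ := h <;> obtain ⟨j, -, hj | hj⟩ := h'
  · exact hi.right_unique pairCandidate_rightUnique hj
  · simpa [hi.candidate.1] using hj.candidate.2.1
  · simpa [hj.candidate.1] using hi.candidate.2.1
  · exact hi.left_unique pairCandidate_leftUnique hj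

theorem exists_isPartner_of_rel (hxy : R n x y) (hx : γ x = true) (hy : γ y = false) :
    (∃ z, IsPartner γ R n x z) ∨ ∃ z, IsPartner γ R n y z := by
  have h_cand : PairCandidate γ R (toLex (n, Encodable.encode (y - x))) x y := ⟨hx, hy, hxy, rfl⟩
  obtain ⟨j, hj, ⟨z, hz⟩ | ⟨z, hz⟩⟩ := exists_greedyPair_of_candidate h_cand
  · exact .inl ⟨z, j, Prod.Lex.monotone_fst _ _ hj, .inl hz⟩
  · exact .inr ⟨z, j, Prod.Lex.monotone_fst _ _ hj, .inr hz⟩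

theorem apply_eq_of_rel_of_forall_not_isPartner (hxy : R n x y) (hx : ∀ z, ¬ IsPartner γ R n x z)
    (hy : ∀ z, ¬ IsPartner γ R n y z) : γ x = γ y := by
  by_contra h_ne
  cases hγx : γ x
  · have hγy : γ y = true := by simpa [hγx] using Ne.symm h_ne
    exact (exists_isPartner_of_rel ((R n).symm hxy) hγy hγx).elim (fun ⟨z, hz⟩ => hy z hz)
      fun ⟨z, hz⟩ => hx z hz
  · have hγy : γ y = false := by simpa [hγx] using Ne.symm h_ne
    exact (exists_isPartner_of_rel hxy hγx hγy).elim (fun ⟨z, hz⟩ => hx z hz)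
      fun ⟨z, hz⟩ => hy z hz

theorem isPartner_comp_sub (z : V) (hR : ∀ n x y, R' n (x + z) (y + z) ↔ R n x y) :
    IsPartner (fun x => γ (x - z)) R' n (x + z) (y + z) ↔ IsPartner γ R n x y := by
  have h_cand : ∀ i x y, PairCandidate (fun x => γ (x - z)) R' i (x + z) (y + z) ↔
      PairCandidate γ R i x y := by simp [PairCandidate, hR]
  exact exists_congr fun i => and_congr_right' <| or_congr
    (greedyPair_equiv (.addRight z) (.addRight z) h_cand i x y)
    (greedyPair_equiv (.addRight z) (.addRight z) h_cand i y x)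

theorem measurableSet_isPartner {R : (V → Bool) → ℕ → Setoid V}
    (hR : ∀ n x y, MeasurableSet {γ | R γ n x y}) (n : ℕ) (x y : V) :
    MeasurableSet {γ | IsPartner γ (R γ) n x y} := by
  have : Countable (ℕ ×ₗ ℕ) := inferInstanceAs (Countable (ℕ × ℕ))
  have h_val (b : Bool) (x : V) : MeasurableSet {γ : V → Bool | γ x = b} :=
    measurableSet_eq_fun (measurable_pi_apply x) measurable_const
  have h_pair := measurableSet_greedyPair (C := fun γ => PairCandidate γ (R γ)) fun i x y =>
    (h_val true x).inter ((h_val false y).inter ((hR (ofLex i).1 x y).inter (.const _)))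
  simp only [IsPartner, Set.ofPred_exists, Set.ofPred_and, Set.ofPred_or]
  exact .iUnion fun i => (MeasurableSet.const _).inter ((h_pair i x y).union (h_pair i y x))

/-- The partner of `x` at any stage, and `x` itself if there is none. -/
def partner (γ : V → Bool) (R : ℕ → Setoid V) (x : V) : V :=
  open Classical in if h : ∃ y n, IsPartner γ R n x y then h.choose else x

theorem IsPartner.partner_eq (h : IsPartner γ R n x y) : partner γ R x = y := by
  have h_ex : ∃ y n, IsPartner γ R n x y := ⟨y, n, h⟩
  rw [partner, dif_pos h_ex]
  obtain ⟨m, hm⟩ := h_ex.choose_spec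
  exact hm.unique h

theorem partner_eq_self (h : ∀ y n, ¬ IsPartner γ R n x y) : partner γ R x = x :=
  dif_neg fun ⟨y, n, hy⟩ => h y n hy

theorem partner_eq_iff :
    partner γ R x = y ↔
      (∃ n, IsPartner γ R n x y) ∨ y = x ∧ ∀ z n, ¬ IsPartner γ R n x z := by
  by_cases h : ∃ z n, IsPartner γ R n x z
  · obtain ⟨z, m, hz⟩ := h
    rw [hz.partner_eq]
    refine ⟨fun h => .inl ⟨m, h ▸ hz⟩, ?_⟩
    rintro (⟨n, hn⟩ | ⟨-, h_none⟩)
    · exact hz.unique hn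
    · exact absurd hz (h_none z m)
  · push Not at h
    simp [partner_eq_self h, h, eq_comm]

theorem partner_comp_sub (z : V) (hR : ∀ n x y, R' n (x + z) (y + z) ↔ R n x y) (x : V) :
    partner (fun x => γ (x - z)) R' (x + z) = partner γ R x + z := by
  by_cases h : ∃ y n, IsPartner γ R n x y
  · obtain ⟨y, n, hy⟩ := h
    rw [hy.partner_eq, ((isPartner_comp_sub z hR).2 hy).partner_eq]
  · push Not at h
    rw [partner_eq_self h, partner_eq_self fun y n hy => h (y - z) n ?_]
    rwa [← isPartner_comp_sub z hR, sub_add_cancel]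

theorem measurable_partner [MeasurableSpace V] {R : (V → Bool) → ℕ → Setoid V}
    (hR : ∀ n x y, MeasurableSet {γ | R γ n x y}) (x : V) :
    Measurable fun γ => partner γ (R γ) x := by
  have h_pair := measurableSet_isPartner hR
  refine measurable_to_countable' fun y => ?_
  have h_preimage : (fun γ => partner γ (R γ) x) ⁻¹' {y} = (⋃ n, {γ | IsPartner γ (R γ) n x y}) ∪
      {_γ | y = x} ∩ ⋂ z, ⋂ n, {γ | IsPartner γ (R γ) n x z}ᶜ := by
    ext
    simp [partner_eq_iff]
  rw [h_preimage]
  exact (MeasurableSet.iUnion fun n => h_pair n x y).union <|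
    (MeasurableSet.const _).inter (.iInter fun z => .iInter fun n => (h_pair n x z).compl)

/-- The value of a coin as a sign. -/
def spin (b : Bool) : ℝ := if b then 1 else -1

theorem spin_not (b : Bool) : spin (!b) = -spin b := by
  cases b <;> simp [spin]

theorem abs_spin (b : Bool) : |spin b| = 1 := by
  cases b <;> simp [spin]

/-- The sites without a partner by stage `n`. -/
def unpaired (γ : V → Bool) (R : ℕ → Setoid V) (n : ℕ) : Set V :=
  {x | ∀ y, ¬ IsPartner γ R n x y}

theorem isPartner_partner (hx : x ∉ unpaired γ R n) : IsPartner γ R n x (partner γ R x) := by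
  simp only [unpaired, Set.mem_ofPred_eq, not_forall, not_not] at hx
  obtain ⟨y, hy⟩ := hx
  rwa [hy.partner_eq]

open Classical in
theorem sum_spin_filter_notMem_unpaired {A : Finset V} (hR : Monotone R)
    (hA : ∀ x ∈ A, ∀ y, R n x y → y ∈ A) :
    ∑ x ∈ A with x ∉ unpaired γ R n, spin (γ x) = 0 := by
  refine Finset.sum_involution (fun x _ => partner γ R x) ?_ ?_ ?_ ?_
  · intro x hx
    rw [(isPartner_partner (Finset.mem_filter.1 hx).2).apply_right, spin_not, add_neg_cancel]
  · intro x hx _ h_fixed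
    have h_val := (isPartner_partner (Finset.mem_filter.1 hx).2).apply_right
    simp [h_fixed] at h_val
  · intro x hx
    obtain ⟨hxA, hx⟩ := Finset.mem_filter.1 hx
    exact Finset.mem_filter.2 ⟨hA x hxA _ ((isPartner_partner hx).rel hR),
      fun h_none => h_none x (isPartner_partner hx).symm⟩
  · intro x hx
    exact (isPartner_partner (Finset.mem_filter.1 hx).2).symm.partner_eq

open Classical in
theorem card_filter_unpaired_le {A : Finset V} (hR : Monotone R)
    (hA : ∀ x ∈ A, ∀ y, R n x y ↔ y ∈ A) :
    (Finset.card {x ∈ A | x ∈ unpaired γ R n} : ℝ) ≤ |∑ x ∈ A, spin (γ x)| := by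
  rw [← Finset.sum_filter_add_sum_filter_not A (· ∈ unpaired γ R n),
    sum_spin_filter_notMem_unpaired hR fun x hx y hy => (hA x hx y).1 hy, add_zero]
  rcases Finset.eq_empty_or_nonempty {x ∈ A | x ∈ unpaired γ R n} with h_empty | ⟨x₀, hx₀⟩
  · simp [h_empty]
  · have h_const : ∀ x ∈ A.filter (· ∈ unpaired γ R n), spin (γ x) = spin (γ x₀) := by
      simp only [Finset.mem_filter] at hx₀ ⊢
      intro x hx
      rw [apply_eq_of_rel_of_forall_not_isPartner ((hA x hx.1 x₀).2 hx₀.1) hx.2 hx₀.2]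
    rw [Finset.sum_congr rfl h_const, Finset.sum_const, nsmul_eq_mul, abs_mul, abs_spin]
    simp

end Partner

section Centers

variable {d : ℕ} {C : Set (Site d)} {k M : ℕ}

/-- The points of the grid in `ℤ^d` with `M` points per axis and spacing `5 * k`. A run of `k` cuts
lives on `5 * k` consecutive sites, so runs starting at different grid points are independent. -/
def gridPoint (k : ℕ) (i : Fin d → Fin M) : Site d := fun a => 5 * k * (i a : ℕ)

/-- Choice of a grid point satisfying `b`, or of the origin if there is none. -/
def pickGridPoint (k : ℕ) (b : (Fin d → Fin M) → Prop) : Site d :=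
  open Classical in if h : ∃ i, b i then gridPoint k h.choose else 0

/-- The new center of a cell with center `z`: a site starting a run of `k` cuts, among the
translates of `z` by grid points, and `z` itself if there is no such site. -/
def nextCenter (C : Set (Site d)) (k M : ℕ) (z : Site d) : Site d :=
  z + pickGridPoint k fun i : Fin d → Fin M => HasCutRun (e1 d) C k (z + gridPoint k i)

/-- The center of the level `n` cell of `x`, where cells grow by merging those whose centers move
to a common site. Moves at level `n` look for runs of `K n` cuts and have length at most `2 ^ n`. -/
def center (K : ℕ → ℕ) (C : Set (Site d)) : ℕ → Site d → Site d
  | 0, x => x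
  | n + 1, x => nextCenter C (K (n + 1)) (2 ^ (n + 1) / (5 * K (n + 1))) (center K C n x)

variable {K : ℕ → ℕ} {n : ℕ}

theorem pickGridPoint_mem_Icc (b : (Fin d → Fin M) → Prop) :
    pickGridPoint k b ∈ Set.Icc (0 : Site d) fun _ => 5 * k * M := by
  unfold pickGridPoint
  split_ifs with h
  · refine ⟨fun a => ?_, fun a => ?_⟩
    · simp only [gridPoint, Pi.zero_apply]
      positivity
    · simp only [gridPoint]
      gcongr
      exact (h.choose a).2.le
  · exact ⟨le_rfl, fun a => by simp only [Pi.zero_apply]; positivity⟩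

theorem center_sub_mem_Icc (x : Site d) :
    center K C n x - x ∈ Set.Icc (0 : Site d) fun _ => 2 ^ (n + 1) := by
  induction n with
  | zero => exact ⟨by simp [center], fun a => by simp [center]⟩
  | succ n ih =>
    rw [center, nextCenter, add_sub_right_comm]
    have h_grid : 5 * K (n + 1) * (2 ^ (n + 1) / (5 * K (n + 1)) : ℕ) ≤ (2 : ℤ) ^ (n + 1) :=
      mod_cast Nat.mul_div_le _ _
    have h_move := pickGridPoint_mem_Icc (k := K (n + 1))
      fun i : Fin d → Fin (2 ^ (n + 1) / (5 * K (n + 1))) =>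
        HasCutRun (e1 d) C (K (n + 1)) (center K C n x + gridPoint (K (n + 1)) i)
    refine ⟨add_nonneg ih.1 h_move.1, fun a => ?_⟩
    calc _ ≤ (2 : ℤ) ^ (n + 1) + 2 ^ (n + 1) := add_le_add (ih.2 a) ((h_move.2 a).trans h_grid)
      _ = 2 ^ (n + 1 + 1) := by ring

theorem center_comp_sub (w x : Site d) :
    center K {y | y - w ∈ C} n (x + w) = center K C n x + w := by
  induction n with
  | zero => rfl
  | succ n ih =>
    simp only [center, ih, nextCenter, HasCutRun, Set.mem_ofPred_eq, add_right_comm _ w,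
      add_sub_cancel_right]

theorem monotone_ker_center : Monotone fun n => Setoid.ker (center K C n) :=
  monotone_nat_of_le_succ fun n x y h => by
    rw [Setoid.ker_def] at h ⊢
    rw [center, center, h]

theorem nextCenter_hasCutRun_or (z : Site d) :
    HasCutRun (e1 d) C k (nextCenter C k M z) ∨
      ∀ i : Fin d → Fin M, ¬ HasCutRun (e1 d) C k (nextCenter C k M z + gridPoint k i) := by
  unfold nextCenter pickGridPoint
  split_ifs with h
  · exact .inl h.choose_spec
  · push Not at h
    rw [add_zero]
    exact .inr h

theorem measurable_nextCenter (k M : ℕ) (z : Site d) :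
    Measurable fun γ => nextCenter (cuts (e1 d) γ) k M z := by
  have h_runs : Measurable fun (γ : Config d) (i : Fin d → Fin M) =>
      HasCutRun (e1 d) (cuts (e1 d) γ) k (z + gridPoint k i) :=
    measurable_pi_lambda _ fun i => measurableSet_setOfPred.1 (measurableSet_hasCutRun k _)
  exact (measurable_of_countable fun b => z + pickGridPoint k b).comp h_runs

theorem measurable_center (n : ℕ) (x : Site d) :
    Measurable fun γ => center K (cuts (e1 d) γ) n x := by
  induction n with
  | zero => exact measurable_const
  | succ n ih =>
    have h_next : Measurable fun p : Site d × Config d =>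
        nextCenter (cuts (e1 d) p.2) (K (n + 1)) (2 ^ (n + 1) / (5 * K (n + 1))) p.1 :=
      measurable_from_prod_countable_right fun z => measurable_nextCenter _ _ z
    exact h_next.comp (ih.prodMk measurable_id)

theorem not_isOfFinAddOrder_e1 (hd : 0 < d) : ¬ IsOfFinAddOrder (e1 d) :=
  not_isOfFinAddOrder_of_isAddTorsionFree fun h => by simpa [e1] using congrFun h ⟨0, hd⟩

theorem gridPoint_add_window_injective (hd : 0 < d) (k M : ℕ) :
    Function.Injective fun p : (Fin d → Fin M) × Fin k × Fin 5 =>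
      gridPoint k p.1 + (5 * (p.2.1 : ℤ)) • e1 d + ((p.2.2 : ℤ) - 1) • e1 d := by
  rintro ⟨i, j, w⟩ ⟨i', j', w'⟩ h
  have h_coord (a : Fin d) : 5 * k * ((i a : ℕ) : ℤ) + (5 * j + w - 1) * e1 d a =
      5 * k * ((i' a : ℕ) : ℤ) + (5 * j' + w' - 1) * e1 d a := by
    have h_apply := congrFun h a
    simp only [gridPoint, Pi.add_apply, Pi.smul_apply, smul_eq_mul] at h_apply
    linear_combination h_apply
  have h_first : 5 * (k * ((i ⟨0, hd⟩ : ℕ) : ℤ) + j) + w =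
      5 * (k * ((i' ⟨0, hd⟩ : ℕ) : ℤ) + j') + w' := by
    have h_zero := h_coord ⟨0, hd⟩
    simp only [e1, if_true] at h_zero
    linear_combination h_zero
  have hw : w = w' := by
    ext
    omega
  have hj : j = j' := by
    have h_quot : k * (i ⟨0, hd⟩ : ℕ) + (j : ℕ) = k * (i' ⟨0, hd⟩ : ℕ) + j' := by
      zify
      omega
    have h_mod := congrArg (· % k) h_quot
    ext
    simpa [Nat.mul_add_mod, Nat.mod_eq_of_lt] using h_mod
  have hk : (5 * k : ℤ) ≠ 0 := by
    have := j.pos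
    positivity
  have hi : i = i' := by
    ext a
    subst hw hj
    exact_mod_cast mul_left_cancel₀ hk (add_right_cancel (h_coord a))
  rw [hi, hj, hw]

theorem fairCoins_mem_range_center_le (hd : 0 < d) (n : ℕ) :
    fairCoins (Site d) {γ | 0 ∈ Set.range (center K (cuts (e1 d) γ) (n + 1))} ≤
      (1 / 8) ^ K (n + 1) +
        (1 - (1 / 8) ^ K (n + 1)) ^ ((2 ^ (n + 1) / (5 * K (n + 1))) ^ d) := by
  have he := not_isOfFinAddOrder_e1 hd
  have h_card : Fintype.card (Fin d → Fin (2 ^ (n + 1) / (5 * K (n + 1)))) =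
    (2 ^ (n + 1) / (5 * K (n + 1))) ^ d := by simp
  calc fairCoins (Site d) {γ | 0 ∈ Set.range (center K (cuts (e1 d) γ) (n + 1))}
      ≤ fairCoins (Site d) ({γ | HasCutRun (e1 d) (cuts (e1 d) γ) (K (n + 1)) 0} ∪
          {γ | ∀ i : Fin d → Fin (2 ^ (n + 1) / (5 * K (n + 1))),
            ¬ HasCutRun (e1 d) (cuts (e1 d) γ) (K (n + 1)) (gridPoint (K (n + 1)) i)}) := by
        refine measure_mono ?_
        rintro γ ⟨x, hx⟩
        have h_or := nextCenter_hasCutRun_or (C := cuts (e1 d) γ) (k := K (n + 1))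
          (M := 2 ^ (n + 1) / (5 * K (n + 1))) (center K (cuts (e1 d) γ) n x)
        rw [center] at hx
        simp only [hx, zero_add] at h_or
        exact h_or
    _ ≤ _ := measure_union_le _ _
    _ = _ := by
        rw [fairCoins_hasCutRun he,
          fairCoins_forall_not_hasCutRun (gridPoint_add_window_injective hd _ _), h_card]

end Centers

section MassTransport

variable {α V : Type*} {B : Finset V} {c : V → V} {x z : V}

open Classical in
/-- The cell `c ⁻¹' {z}` of the partition into the fibres of `c`, for a map `c` whose displacements
`c x - x` belong to the finite set `B`. -/
def cell [AddCommGroup V] (B : Finset V) (c : V → V) (z : V) : Finset V :=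
  {x ∈ B.image (z - ·) | c x = z}

theorem mem_cell [AddCommGroup V] (hB : ∀ x, c x - x ∈ B) : x ∈ cell B c z ↔ c x = z := by
  simp only [cell, Finset.mem_filter, and_iff_right_iff_imp, Finset.mem_image]
  rintro rfl
  exact ⟨c x - x, hB x, sub_sub_cancel _ _⟩

open Classical in
theorem sum_cell_zero [AddCommGroup V] (f : V → ℝ) :
    ∑ x ∈ cell B c 0, f x = ∑ b ∈ B, if c (-b) = 0 then f (-b) else 0 := by
  rw [cell, Finset.sum_filter, Finset.sum_image fun b _ b' _ h => sub_right_injective h]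
  simp

theorem integral_comp_of_measurePreserving {β E : Type*} [MeasurableSpace α] [MeasurableSpace β]
    [NormedAddCommGroup E] [NormedSpace ℝ E] {μ : Measure α} {ν : Measure β} {f : α → β} {g : β → E}
    (hf : MeasurePreserving f μ ν) (hg : AEStronglyMeasurable g ν) :
    ∫ a, g (f a) ∂μ = ∫ b, g b ∂ν := by
  rw [← hf.map_eq] at hg ⊢
  exact (integral_map hf.aemeasurable hg).symm

theorem integrable_sum_of_subset [MeasurableSpace α] {μ : Measure α} {A : α → Finset V}
    {g : V → α → ℝ} (hAB : ∀ a, A a ⊆ B) (hA : ∀ y, MeasurableSet {a | y ∈ A a})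
    (hg : ∀ y, Integrable (g y) μ) : Integrable (fun a => ∑ y ∈ A a, g y a) μ := by
  classical
  have h_indicator (a : α) : ∑ y ∈ A a, g y a = ∑ y ∈ B, {a | y ∈ A a}.indicator (g y) a := by
    simp only [Set.indicator_apply, Set.mem_ofPred_eq]
    rw [← Finset.sum_filter, Finset.filter_mem_eq_inter, Finset.inter_eq_right.2 (hAB a)]
  simp only [h_indicator]
  exact integrable_finsetSum _ fun y _ => (hg y).indicator (hA y)

/-- Mass transport: on average, the mass which the origin sends to the center of its cell is the
mass which the origin receives as a center. -/
theorem integral_sum_cell_zero [AddCommGroup V] [MeasurableSpace V] [MeasurableSingletonClass V]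
    {c : (V → Bool) → V → V} (hc : Measurable fun γ => c γ 0) (hB : ∀ γ x, c γ x - x ∈ B)
    (hc_shift : ∀ γ z x, c (fun y => γ (y - z)) (x + z) = c γ x + z)
    {f : (V → Bool) → V → ℝ} (hf : Integrable (fun γ => f γ 0) (fairCoins V))
    (hf_shift : ∀ γ z x, f (fun y => γ (y - z)) (x + z) = f γ x) :
    Integrable (fun γ => ∑ x ∈ cell B (c γ) 0, f γ x) (fairCoins V) ∧
      ∫ γ, ∑ x ∈ cell B (c γ) 0, f γ x ∂fairCoins V = ∫ γ, f γ 0 ∂fairCoins V := by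
  classical
  let sent (b : V) (γ : V → Bool) : ℝ := if c γ 0 = b then f γ 0 else 0
  have h_sent (b : V) : Integrable (sent b) (fairCoins V) :=
    (hf.indicator (hc (measurableSet_singleton b))).congr (.of_forall fun γ => rfl)
  have h_shift (b : V) := measurePreserving_comp_injective (sub_left_injective (b := b))
  have h_received (b : V) (γ : V → Bool) :
      (if c γ (-b) = 0 then f γ (-b) else 0) = sent b fun y => γ (y - b) := by
    have hc_b := hc_shift γ b (-b)
    have hf_b := hf_shift γ b (-b)
    rw [neg_add_cancel] at hc_b hf_b
    simp [sent, hc_b, hf_b]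
  have h_total (γ : V → Bool) : ∑ b ∈ B, sent b γ = f γ 0 := by
    have h_mem : c γ 0 ∈ B := by simpa using hB γ 0
    rw [Finset.sum_ite_eq, if_pos h_mem]
  have h_int (b : V) : Integrable (fun γ => sent b fun y => γ (y - b)) (fairCoins V) :=
    (h_shift b).integrable_comp_of_integrable (h_sent b)
  simp only [sum_cell_zero, h_received]
  refine ⟨integrable_finsetSum _ fun b _ => h_int b, ?_⟩
  simp only [← h_total]
  rw [integral_finsetSum _ fun b _ => h_int b, integral_finsetSum _ fun b _ => h_sent b]
  exact Finset.sum_congr rfl fun b _ =>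
    integral_comp_of_measurePreserving (h_shift b) (h_sent b).aestronglyMeasurable

end MassTransport

section Segments

variable {V : Type*} [AddCommGroup V] {e : V} {C : Set V} {γ : V → Bool} {a b : ℕ}

variable (e) in
/-- The cuts in `C` on the line `ℤ e` next to the origin on either side of it are those at `a e` and
at `-(b + 1) e`, so that the sites `-b e, …, a e` form the segment of the origin. -/
def IsSegment (C : Set V) (a b : ℕ) : Prop :=
  (a : ℤ) • e ∈ C ∧ (-(b : ℤ) - 1) • e ∈ C ∧ ∀ t : ℤ, -(b : ℤ) - 1 < t → t < a → t • e ∉ C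

open Classical in
variable (e) in
/-- The sites `-b e, …, a e`. -/
def siteSegment (a b : ℕ) : Finset V := (Finset.Icc (-(b : ℤ)) a).image (· • e)

open Classical in
theorem card_siteSegment_le : (siteSegment e a b).card ≤ a + b + 1 :=
  Finset.card_image_le.trans (by rw [Int.card_Icc]; omega)

open Classical in
theorem zero_mem_siteSegment : 0 ∈ siteSegment e a b :=
  Finset.mem_image.2 ⟨0, by simp, zero_smul ℤ e⟩

open Classical in
theorem cuts_flip_siteSegment (h : IsSegment e (cuts e γ) a b) :
    cuts e (fun y => γ y ^^ decide (y ∈ siteSegment e a b)) = cuts e γ := by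
  refine cuts_bxor fun y hy => ?_
  rw [ne_eq, decide_eq_decide] at hy
  simp only [siteSegment, Finset.mem_image, Finset.mem_Icc] at hy
  by_cases hy_mem : ∃ t : ℤ, (-(b : ℤ) ≤ t ∧ t ≤ a) ∧ t • e = y
  · obtain ⟨t, ht, rfl⟩ := hy_mem
    obtain rfl : t = a := by
      by_contra h_ne
      exact hy ⟨fun _ => ⟨t + 1, by omega, add_one_zsmul e t⟩, fun _ => ⟨t, ht, rfl⟩⟩
    exact h.1
  · have h_next : ∃ t : ℤ, (-(b : ℤ) ≤ t ∧ t ≤ a) ∧ t • e = y + e := by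
      by_contra h_next
      exact hy (iff_of_false hy_mem h_next)
    obtain ⟨t, ht, hty⟩ := h_next
    have h_pred : (t - 1) • e = y := by rw [sub_one_zsmul, hty, add_neg_cancel_right]
    obtain rfl : t = -(b : ℤ) := by
      by_contra h_ne
      exact hy_mem ⟨t - 1, by omega, h_pred⟩
    exact h_pred ▸ h.2.1

open Classical in
theorem isSegment_flip_iff :
    IsSegment e (cuts e fun y => γ y ^^ decide (y ∈ siteSegment e a b)) a b ↔
      IsSegment e (cuts e γ) a b := by
  refine ⟨fun h => ?_, fun h => by rwa [cuts_flip_siteSegment h]⟩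
  have h_twice := cuts_flip_siteSegment h
  simp only [Bool.xor_assoc, Bool.xor_self, Bool.xor_false] at h_twice
  rwa [h_twice]

theorem measurableSet_isSegment : MeasurableSet {γ : V → Bool | IsSegment e (cuts e γ) a b} := by
  simp only [IsSegment, Set.ofPred_and, Set.ofPred_forall]
  exact (measurableSet_mem_cuts _).inter <| (measurableSet_mem_cuts _).inter <|
    .iInter fun t => .iInter fun _ => .iInter fun _ => (measurableSet_mem_cuts _).compl

theorem fairCoins_isSegment_le (he : ¬ IsOfFinAddOrder e) :
    fairCoins V {γ | IsSegment e (cuts e γ) a b} ≤ (7 / 8) ^ ((a + b) / 5) := by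
  have h_gap : fairCoins V {γ | ∀ i : Fin ((a + b) / 5), (-(b : ℤ) + 5 * i) • e ∉ cuts e γ} =
      (7 / 8) ^ ((a + b) / 5) := by
    rw [fairCoins_forall_notMem_cuts he (by grind [Pairwise]), Fintype.card_fin]
  rw [← h_gap]
  exact measure_mono fun γ hγ i => hγ.2.2 _ (by omega) (by omega)

theorem pairwise_disjoint_isSegment : Pairwise (Function.onFun Disjoint fun p : ℕ × ℕ =>
    {γ : V → Bool | IsSegment e (cuts e γ) p.1 p.2}) := by
  intro p q hpq
  refine Set.disjoint_left.2 fun γ hp hq => hpq (Prod.ext ?_ ?_)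
  · by_contra h_ne
    rcases Nat.lt_or_gt_of_ne h_ne with h | h
    · exact hq.2.2 _ (by omega) (by omega) hp.1
    · exact hp.2.2 _ (by omega) (by omega) hq.1
  · by_contra h_ne
    rcases Nat.lt_or_gt_of_ne h_ne with h | h
    · exact hq.2.2 _ (by omega) (by omega) hp.2.1
    · exact hp.2.2 _ (by omega) (by omega) hq.2.1

theorem ae_exists_isSegment (he : ¬ IsOfFinAddOrder e) :
    ∀ᵐ γ ∂fairCoins V, ∃ a b, IsSegment e (cuts e γ) a b := by
  classical
  filter_upwards [ae_exists_mem_cuts he (f := fun i => 5 * i) (by grind [Pairwise]),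
    ae_exists_mem_cuts he (f := fun i => -1 - 5 * i) (by grind [Pairwise])]
    with γ h_right h_left
  have h_right : ∃ a : ℕ, (a : ℤ) • e ∈ cuts e γ :=
    let ⟨i, hi⟩ := h_right
    ⟨5 * i, by exact_mod_cast hi⟩
  have h_left : ∃ b : ℕ, (-(b : ℤ) - 1) • e ∈ cuts e γ :=
    let ⟨i, hi⟩ := h_left
    ⟨5 * i, by convert hi using 2; push_cast; ring⟩
  refine ⟨Nat.find h_right, Nat.find h_left, Nat.find_spec h_right, Nat.find_spec h_left, ?_⟩
  intro t h_gt h_lt h_cut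
  rcases t with u | u
  · exact Nat.find_min h_right (m := u) (by simpa using h_lt) h_cut
  · refine Nat.find_min h_left (m := u) (by omega) ?_
    rwa [show (-(u : ℤ) - 1) = Int.negSucc u by omega]

end Segments

section SecondMoment

variable {V : Type*}

theorem measurable_spin (x : V) : Measurable fun γ : V → Bool => spin (γ x) :=
  (measurable_of_countable spin).comp (measurable_pi_apply x)

theorem integrable_spin_mul_spin (x y : V) :
    Integrable (fun γ => spin (γ x) * spin (γ y)) (fairCoins V) :=
  Integrable.of_bound ((measurable_spin x).mul (measurable_spin y)).aestronglyMeasurable 1 <|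
    .of_forall fun γ => by rw [Real.norm_eq_abs, abs_mul, abs_spin, abs_spin, one_mul]

variable [AddCommGroup V] {e : V} {A : Set V → Finset V} {B : Finset V} {a b : ℕ}

theorem integrable_sum_spin_mul_spin (hAB : ∀ C, A C ⊆ B)
    (hA : ∀ y, MeasurableSet {γ : V → Bool | y ∈ A (cuts e γ)}) :
    Integrable (fun γ => ∑ y ∈ A (cuts e γ), spin (γ 0) * spin (γ y)) (fairCoins V) :=
  integrable_sum_of_subset (fun _ => hAB _) hA (integrable_spin_mul_spin 0)

theorem integrable_sum_spin_mul_spin_filter (hAB : ∀ C, A C ⊆ B)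
    (hA : ∀ y, MeasurableSet {γ : V → Bool | y ∈ A (cuts e γ)}) (p : V → Prop)
    [DecidablePred p] :
    Integrable (fun γ => ∑ y ∈ A (cuts e γ) with p y, spin (γ 0) * spin (γ y)) (fairCoins V) := by
  refine integrable_sum_spin_mul_spin (fun C => (Finset.filter_subset p _).trans (hAB C))
    fun y => ?_
  simp only [Finset.mem_filter, Set.ofPred_and]
  exact (hA y).inter (.const _)

open Classical in
/-- Reversing the coins on the segment of the origin reverses `spin (γ 0)` but neither the cuts nor
the spins outside the segment. -/
theorem setIntegral_isSegment_eq_zero (hAB : ∀ C, A C ⊆ B)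
    (hA : ∀ y, MeasurableSet {γ : V → Bool | y ∈ A (cuts e γ)}) :
    ∫ γ in {γ | IsSegment e (cuts e γ) a b},
      ∑ y ∈ A (cuts e γ) with y ∉ siteSegment e a b, spin (γ 0) * spin (γ y) ∂fairCoins V = 0 := by
  let f : (V → Bool) → ℝ := Set.indicator {γ | IsSegment e (cuts e γ) a b}
    fun γ => ∑ y ∈ A (cuts e γ) with y ∉ siteSegment e a b, spin (γ 0) * spin (γ y)
  have hf : Integrable f (fairCoins V) :=
    (integrable_sum_spin_mul_spin_filter hAB hA _).indicator measurableSet_isSegment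
  have hf_flip (γ : V → Bool) : f (fun y => γ y ^^ decide (y ∈ siteSegment e a b)) = -f γ := by
    simp only [f, Set.indicator_apply, Set.mem_ofPred_eq, isSegment_flip_iff]
    split_ifs with h
    · rw [cuts_flip_siteSegment h, ← Finset.sum_neg_distrib]
      refine Finset.sum_congr rfl fun y hy => ?_
      simp [zero_mem_siteSegment, (Finset.mem_filter.1 hy).2, spin_not]
    · exact neg_zero.symm
  have h_odd : ∫ γ, f γ ∂fairCoins V = -∫ γ, f γ ∂fairCoins V := by
    rw [← integral_neg, ← integral_comp_of_measurePreserving (measurePreserving_bxor _)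
      hf.aestronglyMeasurable]
    exact integral_congr_ae (.of_forall hf_flip)
  rw [← integral_indicator measurableSet_isSegment]
  exact self_eq_neg.1 h_odd

open Classical in
theorem setIntegral_isSegment_le (he : ¬ IsOfFinAddOrder e) (hAB : ∀ C, A C ⊆ B)
    (hA : ∀ y, MeasurableSet {γ : V → Bool | y ∈ A (cuts e γ)}) :
    ∫ γ in {γ | IsSegment e (cuts e γ) a b},
      ∑ y ∈ A (cuts e γ), spin (γ 0) * spin (γ y) ∂fairCoins V ≤
        (a + b + 1) * (7 / 8) ^ ((a + b) / 5) := by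
  let G := {γ | IsSegment e (cuts e γ) a b}
  let near (γ : V → Bool) : ℝ :=
    ∑ y ∈ A (cuts e γ) with y ∈ siteSegment e a b, spin (γ 0) * spin (γ y)
  have h_near (γ : V → Bool) : near γ ≤ a + b + 1 := by
    calc near γ ≤ ∑ y ∈ A (cuts e γ) with y ∈ siteSegment e a b, 1 := by
          unfold near
          gcongr
          exact (le_abs_self _).trans (by rw [abs_mul, abs_spin, abs_spin, one_mul])
      _ ≤ a + b + 1 := by
          rw [Finset.sum_const, nsmul_one, Finset.filter_mem_eq_inter]
          exact_mod_cast (Finset.card_le_card Finset.inter_subset_right).trans card_siteSegment_le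
  have h_near_int : Integrable near (fairCoins V) := integrable_sum_spin_mul_spin_filter hAB hA _
  have hG : (fairCoins V).real G ≤ (7 / 8) ^ ((a + b) / 5) := by
    have h_toReal := ENNReal.toReal_mono (by finiteness)
      (fairCoins_isSegment_le (a := a) (b := b) he)
    simpa [Measure.real, G] using h_toReal
  calc ∫ γ in G, ∑ y ∈ A (cuts e γ), spin (γ 0) * spin (γ y) ∂fairCoins V
      = ∫ γ in G, near γ ∂fairCoins V := by
        simp only [← Finset.sum_filter_add_sum_filter_not (A _) (· ∈ siteSegment e a b)]
        rw [integral_add h_near_int.integrableOn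
          (integrable_sum_spin_mul_spin_filter hAB hA _).integrableOn,
          setIntegral_isSegment_eq_zero hAB hA, add_zero]
    _ ≤ ∫ γ in G, (a + b + 1 : ℝ) ∂fairCoins V :=
        setIntegral_mono h_near_int.integrableOn (integrable_const _) h_near
    _ = (a + b + 1) * (fairCoins V).real G := by simp [mul_comm]
    _ ≤ (a + b + 1) * (7 / 8) ^ ((a + b) / 5) := by gcongr

/-- A bound for the second moments of cell sums. The sum runs over the number of sites of the
segment of the origin on either side of it. -/
def secondMomentBound : ℝ := ∑' p : ℕ × ℕ, (p.1 + p.2 + 1 : ℝ) * (7 / 8) ^ ((p.1 + p.2) / 5)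

theorem summable_secondMomentBound :
    Summable fun p : ℕ × ℕ => (p.1 + p.2 + 1 : ℝ) * (7 / 8) ^ ((p.1 + p.2) / 5) := by
  have h_one : Summable fun a : ℕ => (a + 1 : ℝ) * (98 / 100) ^ a := by
    have h_linear := summable_pow_mul_geometric_of_norm_lt_one 1 (r := (98 / 100 : ℝ)) (by norm_num)
    have h_const := summable_geometric_of_lt_one (r := (98 / 100 : ℝ)) (by norm_num) (by norm_num)
    exact (h_linear.add h_const).congr fun a => by ring
  have h_two := (h_one.mul_of_nonneg h_one (fun a => by positivity) fun a => by positivity).mul_left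
    ((98 / 100 : ℝ) ^ 4)⁻¹
  refine Summable.of_nonneg_of_le (fun p => by positivity) (fun ⟨a, b⟩ => ?_) h_two
  have h_pow : (7 / 8 : ℝ) ^ ((a + b) / 5) ≤ ((98 / 100 : ℝ) ^ 4)⁻¹ * (98 / 100) ^ (a + b) := by
    calc (7 / 8 : ℝ) ^ ((a + b) / 5) ≤ ((98 / 100 : ℝ) ^ 5) ^ ((a + b) / 5) := by gcongr; norm_num
      _ ≤ ((98 / 100 : ℝ) ^ 4)⁻¹ * (98 / 100) ^ (a + b) := by
          rw [← pow_mul, inv_mul_eq_div, le_div_iff₀ (by positivity), ← pow_add]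
          exact pow_le_pow_of_le_one (by norm_num) (by norm_num) (by omega)
  have h_prod : (a + b + 1 : ℝ) ≤ (a + 1) * (b + 1) := by
    nlinarith [mul_nonneg a.cast_nonneg (α := ℝ) b.cast_nonneg]
  calc (a + b + 1 : ℝ) * (7 / 8) ^ ((a + b) / 5)
      ≤ ((a + 1) * (b + 1)) * (((98 / 100 : ℝ) ^ 4)⁻¹ * (98 / 100) ^ (a + b)) := by gcongr
    _ = ((98 / 100 : ℝ) ^ 4)⁻¹ * ((a + 1) * (98 / 100) ^ a * ((b + 1) * (98 / 100) ^ b)) := by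
        rw [pow_add]
        ring

theorem integral_sum_spin_mul_spin_le (he : ¬ IsOfFinAddOrder e) (hAB : ∀ C, A C ⊆ B)
    (hA : ∀ y, MeasurableSet {γ : V → Bool | y ∈ A (cuts e γ)}) :
    ∫ γ, ∑ y ∈ A (cuts e γ), spin (γ 0) * spin (γ y) ∂fairCoins V ≤ secondMomentBound := by
  have h_sum := hasSum_integral_iUnion
    (fun p : ℕ × ℕ => measurableSet_isSegment (e := e) (a := p.1) (b := p.2))
    pairwise_disjoint_isSegment (integrable_sum_spin_mul_spin hAB hA).integrableOn
  have h_cover : ∀ᵐ γ ∂fairCoins V,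
      γ ∈ ⋃ p : ℕ × ℕ, {γ | IsSegment e (cuts e γ) p.1 p.2} := by
    filter_upwards [ae_exists_isSegment he] with γ ⟨a, b, h⟩
    exact Set.mem_iUnion.2 ⟨(a, b), h⟩
  rw [Measure.restrict_eq_self_of_ae_mem h_cover] at h_sum
  exact hasSum_le (fun p => setIntegral_isSegment_le he hAB hA) h_sum
    summable_secondMomentBound.hasSum

end SecondMoment

section CellSums

variable {V : Type*} [AddCommGroup V] {e : V} {B : Finset V} {c : Set V → V → V}

theorem integrable_sum_spin_cell [MeasurableSpace V] [MeasurableSingletonClass V]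
    (hc : ∀ x, Measurable fun γ => c (cuts e γ) x) (hB : ∀ γ x, c (cuts e γ) x - x ∈ B) :
    Integrable (fun γ => ∑ x ∈ cell B (c (cuts e γ)) 0, spin (γ x)) (fairCoins V) := by
  refine integrable_sum_of_subset (fun γ => by classical exact Finset.filter_subset _ _)
    (fun x => ?_) fun x => ?_
  · simp only [mem_cell (hB _)]
    exact hc x (measurableSet_singleton 0)
  · exact .of_bound (measurable_spin x).aestronglyMeasurable 1
      (.of_forall fun γ => (abs_spin _).le)

theorem sum_spin_cell_comp_sub {c c' : V → V} (hB : ∀ x, c x - x ∈ B) (hB' : ∀ x, c' x - x ∈ B)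
    {z : V} (hc : ∀ x, c' (x + z) = c x + z) (γ : V → Bool) (w : V) :
    ∑ y ∈ cell B c' (w + z), spin (γ (y - z)) = ∑ y ∈ cell B c w, spin (γ y) := by
  refine (Finset.sum_equiv (.addRight z) (fun y => ?_) fun y _ => ?_).symm
  · simp [mem_cell hB, mem_cell hB', hc]
  · simp

/-- By mass transport from the sites of a cell to its center, the square of the cell sum becomes the
sum of the spins of the cell of the origin, multiplied by the spin of the origin. -/
theorem integral_sq_sum_spin_cell_le [Countable V] [MeasurableSpace V] [MeasurableSingletonClass V]
    (he : ¬ IsOfFinAddOrder e) (hc : ∀ x, Measurable fun γ => c (cuts e γ) x)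
    (hB : ∀ C x, c C x - x ∈ B) (hc_shift : ∀ C z x, c {y | y - z ∈ C} (x + z) = c C x + z) :
    Integrable (fun γ => (∑ x ∈ cell B (c (cuts e γ)) 0, spin (γ x)) ^ 2) (fairCoins V) ∧
      ∫ γ, (∑ x ∈ cell B (c (cuts e γ)) 0, spin (γ x)) ^ 2 ∂fairCoins V ≤ secondMomentBound := by
  classical
  have hc_cuts (γ : V → Bool) (z x : V) :
      c (cuts e fun y => γ (y - z)) (x + z) = c (cuts e γ) x + z := by
    rw [cuts_comp_sub, hc_shift]
  have h_meas (y : V) :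
      MeasurableSet {γ : V → Bool | y ∈ cell B (c (cuts e γ)) (c (cuts e γ) 0)} := by
    simp only [mem_cell (hB _)]
    exact measurableSet_eq_fun (hc y) (hc 0)
  have h_subset (C : Set V) : cell B (c C) (c C 0) ⊆ Finset.image₂ (· - ·) B B := by
    intro y hy
    rw [mem_cell (hB C)] at hy
    exact Finset.mem_image₂.2 ⟨c C 0, by simpa using hB C 0, c C 0 - y, hy ▸ hB C y, by abel⟩
  have h_square (γ : V → Bool) : (∑ x ∈ cell B (c (cuts e γ)) 0, spin (γ x)) ^ 2 =
      ∑ x ∈ cell B (c (cuts e γ)) 0,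
        ∑ y ∈ cell B (c (cuts e γ)) (c (cuts e γ) x), spin (γ x) * spin (γ y) := by
    rw [sq, Finset.sum_mul_sum]
    exact Finset.sum_congr rfl fun x hx => by rw [(mem_cell (hB _)).1 hx]
  have h_transport := integral_sum_cell_zero (hc 0) (fun γ => hB (cuts e γ)) hc_cuts
    (f := fun γ x => ∑ y ∈ cell B (c (cuts e γ)) (c (cuts e γ) x), spin (γ x) * spin (γ y))
    (integrable_sum_spin_mul_spin h_subset h_meas) fun γ z x => by
      simp only [← Finset.mul_sum, hc_cuts, add_sub_cancel_right,
        sum_spin_cell_comp_sub (hB (cuts e γ)) (hB _) (hc_cuts γ z)]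
  simp only [h_square]
  exact ⟨h_transport.1, h_transport.2 ▸ integral_sum_spin_mul_spin_le he h_subset h_meas⟩

end CellSums

theorem sq_integral_abs_le {α : Type*} [MeasurableSpace α] {μ : Measure α} [IsFiniteMeasure μ]
    {f : α → ℝ} {E : Set α} (hE : MeasurableSet E) (hfE : ∀ a ∉ E, f a = 0) (hf : Integrable f μ)
    (hf_sq : Integrable (fun a => f a ^ 2) μ) :
    (∫ a, |f a| ∂μ) ^ 2 ≤ μ.real E * ∫ a, f a ^ 2 ∂μ := by
  have h_one : Integrable (E.indicator fun _ => (1 : ℝ)) μ := (integrable_const 1).indicator hE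
  have h_quadratic (t : ℝ) :
      0 ≤ μ.real E * (t * t) + (-2 * ∫ a, |f a| ∂μ) * t + ∫ a, f a ^ 2 ∂μ := by
    have h_expand (a : α) : (t * E.indicator (fun _ => 1) a - |f a|) ^ 2 =
        (t * t) * E.indicator (fun _ => 1) a - (2 * t) * |f a| + f a ^ 2 := by
      by_cases ha : a ∈ E
      · rw [Set.indicator_of_mem ha, ← sq_abs (f a)]
        ring
      · simp [Set.indicator_of_notMem ha, hfE a ha]
    calc 0 ≤ ∫ a, (t * E.indicator (fun _ => 1) a - |f a|) ^ 2 ∂μ :=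
          integral_nonneg fun a => sq_nonneg _
      _ = (t * t) * μ.real E - (2 * t) * ∫ a, |f a| ∂μ + ∫ a, f a ^ 2 ∂μ := by
          simp only [h_expand]
          have h_diff : Integrable
              (fun a => t * t * E.indicator (fun _ => 1) a - 2 * t * |f a|) μ :=
            (h_one.const_mul _).sub (hf.abs.const_mul _)
          rw [integral_add h_diff hf_sq,
            integral_sub (h_one.const_mul _) (hf.abs.const_mul _), integral_const_mul,
            integral_const_mul, integral_indicator_const _ hE, smul_eq_mul, mul_one]
      _ = _ := by ring
  have h_discrim := discrim_le_zero h_quadratic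
  rw [discrim] at h_discrim
  linarith

section Unpaired

variable {d : ℕ} {K : ℕ → ℕ}

/-- Two sites are related at level `n` if they lie in the same cell of that level. -/
def cellRel (K : ℕ → ℕ) (γ : Config d) (n : ℕ) : Setoid (Site d) :=
  Setoid.ker (center K (cuts (e1 d) γ) n)

theorem monotone_cellRel (γ : Config d) : Monotone (cellRel K γ) :=
  monotone_ker_center

theorem measurableSet_cellRel (n : ℕ) (x y : Site d) : MeasurableSet {γ | cellRel K γ n x y} :=
  measurableSet_eq_fun (measurable_center n x) (measurable_center n y)

theorem cellRel_comp_sub (γ : Config d) (z : Site d) (n : ℕ) (x y : Site d) :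
    cellRel K (fun x => γ (x - z)) n (x + z) (y + z) ↔ cellRel K γ n x y := by
  rw [cellRel, cellRel, Setoid.ker_def, Setoid.ker_def, cuts_comp_sub, center_comp_sub,
    center_comp_sub]
  exact add_left_inj z

theorem measurableSet_mem_unpaired (n : ℕ) (x : Site d) :
    MeasurableSet {γ : Config d | x ∈ unpaired γ (cellRel K γ) n} := by
  change MeasurableSet {γ | ∀ y, ¬ IsPartner γ (cellRel K γ) n x y}
  rw [Set.ofPred_forall]
  exact .iInter fun y =>
    (measurableSet_isPartner (R := cellRel K) measurableSet_cellRel n x y).compl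

theorem mem_unpaired_comp_sub (γ : Config d) (z x : Site d) (n : ℕ) :
    x + z ∈ unpaired (fun y => γ (y - z)) (cellRel K fun y => γ (y - z)) n ↔
      x ∈ unpaired γ (cellRel K γ) n := by
  simp only [unpaired, Set.mem_ofPred_eq]
  rw [← (Equiv.addRight z).forall_congr_right]
  simp only [Equiv.coe_addRight, isPartner_comp_sub z (cellRel_comp_sub γ z)]

theorem measurableSet_mem_range_center (n : ℕ) :
    MeasurableSet {γ : Config d | 0 ∈ Set.range (center K (cuts (e1 d) γ) n)} := by
  simp only [Set.mem_range, Set.ofPred_exists]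
  exact .iUnion fun x => measurable_center n x (measurableSet_singleton 0)

/-- The sum of the spins of the level `n` cell with center at the origin. -/
def centeredCellSpin (K : ℕ → ℕ) (n : ℕ) (γ : Config d) : ℝ :=
  ∑ x ∈ cell (Finset.Icc 0 fun _ => 2 ^ (n + 1)) (center K (cuts (e1 d) γ) n) 0, spin (γ x)

theorem center_sub_mem_finsetIcc (C : Set (Site d)) (n : ℕ) (x : Site d) :
    center K C n x - x ∈ Finset.Icc (0 : Site d) fun _ => 2 ^ (n + 1) :=
  Finset.mem_Icc.2 (center_sub_mem_Icc x)

theorem integrable_centeredCellSpin (n : ℕ) :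
    Integrable (centeredCellSpin K n) (fairCoins (Site d)) :=
  integrable_sum_spin_cell (c := fun C => center K C n) (measurable_center n)
    fun γ => center_sub_mem_finsetIcc (cuts (e1 d) γ) n

theorem integral_sq_centeredCellSpin_le (hd : 0 < d) (n : ℕ) :
    Integrable (fun γ => centeredCellSpin K n γ ^ 2) (fairCoins (Site d)) ∧
      ∫ γ, centeredCellSpin K n γ ^ 2 ∂fairCoins (Site d) ≤ secondMomentBound :=
  integral_sq_sum_spin_cell_le (c := fun C => center K C n) (not_isOfFinAddOrder_e1 hd)
    (measurable_center n) (fun C => center_sub_mem_finsetIcc C n) fun _ z x => center_comp_sub z x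

theorem centeredCellSpin_eq_zero {n : ℕ} {γ : Config d}
    (h : 0 ∉ Set.range (center K (cuts (e1 d) γ) n)) : centeredCellSpin K n γ = 0 :=
  Finset.sum_eq_zero fun x hx =>
    absurd ⟨x, (mem_cell (center_sub_mem_finsetIcc _ n)).1 hx⟩ h

theorem real_mem_unpaired_le_integral (n : ℕ) :
    (fairCoins (Site d)).real {γ | 0 ∈ unpaired γ (cellRel K γ) n} ≤
      ∫ γ, |centeredCellSpin K n γ| ∂fairCoins (Site d) := by
  classical
  obtain ⟨h_int, h_transport⟩ := integral_sum_cell_zero (measurable_center (K := K) n 0)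
    (fun γ => center_sub_mem_finsetIcc (cuts (e1 d) γ) n)
    (fun γ z x => by rw [cuts_comp_sub, center_comp_sub])
    (f := fun γ x => if x ∈ unpaired γ (cellRel K γ) n then 1 else 0)
    ((integrable_const 1).indicator (measurableSet_mem_unpaired n 0))
    fun γ z x => by simp only [mem_unpaired_comp_sub]
  calc (fairCoins (Site d)).real {γ | 0 ∈ unpaired γ (cellRel K γ) n}
      = ∫ γ, (if 0 ∈ unpaired γ (cellRel K γ) n then 1 else 0) ∂fairCoins (Site d) :=
        (integral_indicator_one (measurableSet_mem_unpaired n 0)).symm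
    _ = _ := h_transport.symm
    _ ≤ _ := integral_mono h_int (integrable_centeredCellSpin n).abs fun γ => by
        simp only [Finset.sum_boole]
        refine card_filter_unpaired_le (monotone_cellRel γ) fun x hx y => ?_
        rw [mem_cell (center_sub_mem_finsetIcc _ n)] at hx ⊢
        rw [cellRel, Setoid.ker_def, hx, eq_comm]

theorem sq_real_mem_unpaired_le (hd : 0 < d) (n : ℕ) :
    (fairCoins (Site d)).real {γ | 0 ∈ unpaired γ (cellRel K γ) n} ^ 2 ≤
      (fairCoins (Site d)).real {γ | 0 ∈ Set.range (center K (cuts (e1 d) γ) n)} *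
        secondMomentBound := by
  obtain ⟨h_int_sq, h_moment⟩ := integral_sq_centeredCellSpin_le (K := K) hd n
  calc _ ≤ (∫ γ, |centeredCellSpin K n γ| ∂fairCoins (Site d)) ^ 2 := by
        gcongr
        exact real_mem_unpaired_le_integral n
    _ ≤ _ := sq_integral_abs_le (measurableSet_mem_range_center n)
        (fun γ hγ => centeredCellSpin_eq_zero hγ) (integrable_centeredCellSpin n) h_int_sq
    _ ≤ _ := by gcongr

end Unpaired

section Parameters

open Filter

variable {d n : ℕ} {a : ℝ}

/-- The number of cuts required in the runs at level `n`, for which runs starting at a given site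
have probability of order `2 ^ (-a * n)`. -/
def runLength (a : ℝ) (n : ℕ) : ℕ := ⌈a / 3 * n⌉₊

theorem runLength_pos (ha : 0 < a) (hn : 0 < n) : 0 < runLength a n :=
  Nat.ceil_pos.2 (by positivity)

theorem runLength_le_mul (had : a ≤ d) : runLength a n ≤ d * n := by
  rw [runLength, Nat.ceil_le, Nat.cast_mul]
  gcongr
  linarith [d.cast_nonneg (α := ℝ)]

theorem one_eighth_pow_eq_two_rpow (k : ℕ) : (1 / 8 : ℝ) ^ k = 2 ^ (-(3 * k) : ℝ) := by
  rw [Real.rpow_neg two_pos.le, Real.rpow_mul two_pos.le, Real.rpow_natCast, ← inv_pow]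
  norm_num

theorem two_pow_rpow (b : ℝ) : ((2 : ℝ) ^ n) ^ b = 2 ^ (b * n) := by
  rw [← Real.rpow_natCast_mul two_pos.le, mul_comm]

theorem one_eighth_pow_runLength_le : (1 / 8 : ℝ) ^ runLength a n ≤ (2 ^ n) ^ (-a) := by
  rw [one_eighth_pow_eq_two_rpow, two_pow_rpow]
  refine Real.rpow_le_rpow_of_exponent_le one_le_two ?_
  linarith [Nat.le_ceil (a / 3 * n), show (runLength a n : ℝ) = ⌈a / 3 * n⌉₊ from rfl]

theorem le_one_eighth_pow_runLength (ha : 0 ≤ a) :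
    ((2 : ℝ) ^ n) ^ (-a) / 8 ≤ (1 / 8) ^ runLength a n := by
  have h_eight : (8 : ℝ) = 2 ^ (3 : ℝ) := by norm_num
  rw [one_eighth_pow_eq_two_rpow, two_pow_rpow, h_eight, ← Real.rpow_sub two_pos]
  refine Real.rpow_le_rpow_of_exponent_le one_le_two ?_
  linarith [Nat.ceil_lt_add_one (a := a / 3 * n) (by positivity),
    show (runLength a n : ℝ) = ⌈a / 3 * n⌉₊ from rfl]

theorem sub_one_le_gridSize (ha : 0 < a) (had : a ≤ d) (hn : 0 < n) :
    (2 : ℝ) ^ n / (5 * d * n) - 1 ≤ (2 ^ n / (5 * runLength a n) : ℕ) := by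
  have h_run : (runLength a n : ℝ) ≤ d * n := mod_cast runLength_le_mul had
  have h_run_pos : (0 : ℝ) < runLength a n := mod_cast runLength_pos ha hn
  have h_floor := (Nat.sub_one_lt_floor ((2 ^ n : ℕ) / (5 * runLength a n : ℕ) : ℝ)).le
  rw [Nat.floor_div_eq_div] at h_floor
  refine le_trans ?_ h_floor
  push_cast
  rw [mul_assoc 5 (d : ℝ)]
  gcongr

theorem eventually_mul_sq_le_pow {b : ℝ} (hb : 1 < b) (c : ℝ) :
    ∀ᶠ n : ℕ in atTop, c * n ^ 2 ≤ b ^ n := by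
  have h_lim := (tendsto_pow_const_div_const_pow_of_one_lt 2 hb).const_mul c
  rw [mul_zero] at h_lim
  filter_upwards [h_lim.eventually_le_const one_pos] with n hn
  rwa [← mul_div_assoc, div_le_one (pow_pos (one_pos.trans hb) n)] at hn

theorem eventually_le_gridSize_mul (ha : 0 < a) (had : a < d) (c : ℝ) :
    ∀ᶠ n : ℕ in atTop,
      c * n + 1 ≤ (2 ^ n / (5 * runLength a n) : ℕ) * ((2 : ℝ) ^ n) ^ (-a / d) := by
  have hd : (0 : ℝ) < d := ha.trans had
  have h_base : 1 < (2 : ℝ) ^ (1 - a / d) :=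
    Real.one_lt_rpow one_lt_two (by rwa [sub_pos, div_lt_one hd])
  filter_upwards [eventually_mul_sq_le_pow h_base (5 * d * (|c| + 2)), eventually_gt_atTop 0]
    with n hn hn_pos
  have hn_one : (1 : ℝ) ≤ n := mod_cast hn_pos
  have hx_pos : (0 : ℝ) < (2 ^ n) ^ (-a / d) := by positivity
  have hx_le : ((2 : ℝ) ^ n) ^ (-a / d) ≤ 1 :=
    Real.rpow_le_one_of_one_le_of_nonpos (one_le_pow₀ one_le_two)
      (div_nonpos_of_nonpos_of_nonneg (by linarith) hd.le)
  have h_pow : ((2 : ℝ) ^ (1 - a / d)) ^ n = 2 ^ n * (2 ^ n) ^ (-a / d) := by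
    rw [← Real.rpow_natCast, ← Real.rpow_mul two_pos.le, two_pow_rpow, ← Real.rpow_natCast,
      ← Real.rpow_add two_pos]
    ring_nf
  rw [h_pow] at hn
  calc c * n + 1 ≤ (|c| + 2) * n - 1 := by nlinarith [le_abs_self c]
    _ ≤ 2 ^ n * (2 ^ n) ^ (-a / d) / (5 * d * n) - 1 := by
        gcongr
        rw [le_div_iff₀ (by positivity)]
        linarith
    _ ≤ (2 ^ n / (5 * d * n) - 1) * (2 ^ n) ^ (-a / d) := by
        rw [sub_mul, one_mul, div_mul_eq_mul_div]
        linarith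
    _ ≤ _ := by
        gcongr
        exact sub_one_le_gridSize ha had.le hn_pos

theorem eventually_one_sub_pow_gridSize_le (ha : 0 < a) (had : a < d) :
    ∀ᶠ n : ℕ in atTop,
      (1 - (1 / 8 : ℝ) ^ runLength a n) ^ ((2 ^ n / (5 * runLength a n)) ^ d) ≤
        (2 ^ n) ^ (-a) := by
  have hd : d ≠ 0 := by
    rintro rfl
    exact (ha.trans had).ne' Nat.cast_zero
  filter_upwards [eventually_le_gridSize_mul ha had (8 * (a * Real.log 2))] with n hn
  set p : ℝ := (1 / 8) ^ runLength a n
  set M := 2 ^ n / (5 * runLength a n)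
  have hp : p ≤ 1 := pow_le_one₀ (by norm_num) (by norm_num)
  have h_log : 0 ≤ 8 * (a * Real.log 2) * n := by positivity
  have h_exponent : a * Real.log 2 * n ≤ p * (M ^ d : ℕ) :=
    calc a * Real.log 2 * n ≤ (M * ((2 : ℝ) ^ n) ^ (-a / d)) / 8 := by linarith
      _ ≤ (M * ((2 : ℝ) ^ n) ^ (-a / d)) ^ d / 8 := by
          gcongr
          exact le_self_pow₀ (by linarith) hd
      _ = (2 ^ n) ^ (-a) / 8 * M ^ d := by
          rw [mul_pow, ← Real.rpow_mul_natCast (by positivity),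
            div_mul_cancel₀ _ (Nat.cast_ne_zero.2 hd)]
          ring
      _ ≤ p * (M ^ d : ℕ) := by
          rw [Nat.cast_pow]
          gcongr
          exact le_one_eighth_pow_runLength ha.le
  calc (1 - p) ^ (M ^ d) ≤ Real.exp (-p) ^ (M ^ d) := by
        exact pow_le_pow_left₀ (sub_nonneg.2 hp) (Real.one_sub_le_exp_neg p) _
    _ = Real.exp (-(p * (M ^ d : ℕ))) := by rw [← Real.exp_nat_mul]; ring_nf
    _ ≤ Real.exp (-(a * Real.log 2 * n)) := by gcongr
    _ = (2 ^ n) ^ (-a) := by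
        rw [two_pow_rpow, Real.rpow_def_of_pos two_pos]
        ring_nf

theorem eventually_real_mem_range_center_le (ha : 0 < a) (had : a < d) :
    ∀ᶠ n : ℕ in atTop,
      (fairCoins (Site d)).real {γ | 0 ∈ Set.range (center (runLength a) (cuts (e1 d) γ) n)} ≤
        2 * (2 ^ n) ^ (-a) := by
  have hd : 0 < d := Nat.cast_pos.1 (ha.trans had)
  filter_upwards [eventually_one_sub_pow_gridSize_le ha had, eventually_ne_atTop 0] with n hn hn_ne
  obtain ⟨m, rfl⟩ := Nat.exists_eq_succ_of_ne_zero hn_ne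
  have h_le_one : (1 / 8 : ℝ≥0∞) ^ runLength a (m + 1) ≤ 1 := pow_le_one₀ zero_le (by simp)
  have h_toReal : (fairCoins (Site d)).real
      {γ | 0 ∈ Set.range (center (runLength a) (cuts (e1 d) γ) (m + 1))} ≤
      (1 / 8) ^ runLength a (m + 1) + (1 - (1 / 8) ^ runLength a (m + 1)) ^
        ((2 ^ (m + 1) / (5 * runLength a (m + 1))) ^ d) := by
    have h_mono := ENNReal.toReal_mono (by finiteness)
      (fairCoins_mem_range_center_le (K := runLength a) hd m)
    rwa [ENNReal.toReal_add (by finiteness) (by finiteness), ENNReal.toReal_pow,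
      ENNReal.toReal_pow, ENNReal.toReal_sub_of_le h_le_one one_ne_top, ENNReal.toReal_pow,
      ENNReal.toReal_div, ENNReal.toReal_one, ENNReal.toReal_ofNat] at h_mono
  linarith [one_eighth_pow_runLength_le (a := a) (n := m + 1)]

theorem isBigO_real_mem_unpaired {β : ℝ} (hβ : 0 < β) (hβd : β < d / 2) :
    (fun n : ℕ => (fairCoins (Site d)).real
        {γ | 0 ∈ unpaired γ (cellRel (runLength (2 * β)) γ) n}) =O[atTop]
      fun n => ((2 : ℝ) ^ n) ^ (-β) := by
  have hd : 0 < d := Nat.cast_pos.1 (by linarith : (0 : ℝ) < d)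
  have h_bound : 0 ≤ secondMomentBound := tsum_nonneg fun p => by positivity
  refine .of_bound (√(2 * secondMomentBound)) ?_
  filter_upwards [eventually_real_mem_range_center_le (a := 2 * β) (by positivity) (by linarith)]
    with n hn
  have h_sq : (fairCoins (Site d)).real
      {γ | 0 ∈ unpaired γ (cellRel (runLength (2 * β)) γ) n} ^ 2 ≤
        2 * secondMomentBound * (((2 : ℝ) ^ n) ^ (-β)) ^ 2 :=
    calc _ ≤ _ := sq_real_mem_unpaired_le hd n
      _ ≤ 2 * (2 ^ n) ^ (-(2 * β)) * secondMomentBound := by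
          gcongr
      _ = _ := by
          rw [← Real.rpow_mul_natCast (by positivity)]
          ring_nf
  calc ‖_‖ ≤ √(2 * secondMomentBound * (((2 : ℝ) ^ n) ^ (-β)) ^ 2) := by
        rw [Real.norm_eq_abs]
        exact Real.abs_le_sqrt h_sq
    _ = _ := by
        rw [Real.sqrt_mul' _ (sq_nonneg _), Real.sqrt_sq_eq_abs, Real.norm_eq_abs]

end Parameters

section MatchingRule

open Filter Topology

variable {d : ℕ} {K : ℕ → ℕ} {γ : Config d}

theorem isMatching_partner {R : ℕ → Setoid (Site d)} (h : ∀ x, ∃ n, x ∉ unpaired γ R n) :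
    IsMatching γ (partner γ R) := by
  have h_partner (x : Site d) : ∃ n, IsPartner γ R n x (partner γ R x) :=
    (h x).imp fun _ => isPartner_partner
  have h_involutive : Function.Involutive (partner γ R) := fun x =>
    (h_partner x).elim fun _ hx => hx.symm.partner_eq
  exact ⟨h_involutive.bijective, h_involutive,
    fun x => (h_partner x).elim fun _ hx => hx.apply_right⟩

theorem norm_partner_sub_le {n : ℕ} {x : Site d} (hx : x ∉ unpaired γ (cellRel K γ) n) :
    ‖partner γ (cellRel K γ) x - x‖ ≤ 2 ^ (n + 1) := by
  have h_rel := (isPartner_partner hx).rel (monotone_cellRel γ)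
  rw [cellRel, Setoid.ker_def] at h_rel
  have h_x := center_sub_mem_Icc (K := K) (C := cuts (e1 d) γ) (n := n) x
  have h_y := center_sub_mem_Icc (K := K) (C := cuts (e1 d) γ) (n := n) (partner γ (cellRel K γ) x)
  rw [← h_rel] at h_y
  refine (pi_norm_le_iff_of_nonneg (by positivity)).2 fun i => ?_
  have h_bounds := And.intro (And.intro (h_x.1 i) (h_x.2 i)) (And.intro (h_y.1 i) (h_y.2 i))
  simp only [Pi.sub_apply, Pi.zero_apply] at h_bounds ⊢
  rw [Int.norm_eq_abs]
  norm_cast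
  rw [abs_le]
  push_cast
  omega

theorem fairCoins_mem_unpaired (n : ℕ) (x : Site d) :
    fairCoins (Site d) {γ | x ∈ unpaired γ (cellRel K γ) n} =
      fairCoins (Site d) {γ | 0 ∈ unpaired γ (cellRel K γ) n} := by
  rw [← (measurePreserving_comp_injective (sub_left_injective (b := x))).measure_preimage
    (measurableSet_mem_unpaired n x).nullMeasurableSet]
  refine congrArg _ (Set.ext fun γ => ?_)
  simpa using mem_unpaired_comp_sub γ x 0 n

theorem ae_forall_exists_notMem_unpaired
    (h : Tendsto (fun n => (fairCoins (Site d)).real {γ | 0 ∈ unpaired γ (cellRel K γ) n})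
      atTop (𝓝 0)) :
    ∀ᵐ γ ∂fairCoins (Site d), ∀ x, ∃ n, x ∉ unpaired γ (cellRel K γ) n := by
  refine ae_all_iff.2 fun x => ?_
  rw [ae_iff]
  push Not
  have h_le (n : ℕ) : (fairCoins (Site d)).real {γ | ∀ n, x ∈ unpaired γ (cellRel K γ) n} ≤
      (fairCoins (Site d)).real {γ | 0 ∈ unpaired γ (cellRel K γ) n} := by
    rw [measureReal_def, measureReal_def, ← fairCoins_mem_unpaired n x]
    exact ENNReal.toReal_mono (measure_ne_top _ _) (measure_mono fun γ hγ => hγ n)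
  rw [← measureReal_eq_zero_iff]
  exact le_antisymm (ge_of_tendsto' h h_le) measureReal_nonneg

theorem real_lt_norm_partner_le {β : ℝ} (hβ : 0 ≤ β) {c : ℝ}
    (h : ∀ n : ℕ, (fairCoins (Site d)).real {γ | 0 ∈ unpaired γ (cellRel K γ) n} ≤
      c * ((2 : ℝ) ^ n) ^ (-β)) {r : ℝ} (hr : 2 ≤ r) :
    (fairCoins (Site d)).real {γ | r < ‖partner γ (cellRel K γ) 0‖} ≤ c * 4 ^ β * r ^ (-β) := by
  obtain ⟨n, hn_le, hn_lt⟩ := exists_nat_pow_near (by linarith : 1 ≤ r / 2) one_lt_two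
  have hc : 0 ≤ c := by simpa using measureReal_nonneg.trans (h 0)
  calc _ ≤ (fairCoins (Site d)).real {γ | 0 ∈ unpaired γ (cellRel K γ) n} := by
        refine measureReal_mono fun γ hγ => ?_
        by_contra h_paired
        have h_norm := norm_partner_sub_le h_paired
        rw [sub_zero] at h_norm
        rw [Set.mem_ofPred_eq] at hγ
        linarith [pow_succ (2 : ℝ) n]
    _ ≤ c * ((2 : ℝ) ^ n) ^ (-β) := h n
    _ ≤ c * (r / 4) ^ (-β) := by
        gcongr ?_ * ?_
        exact Real.rpow_le_rpow_of_nonpos (by linarith) (by linarith [pow_succ (2 : ℝ) n])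
          (neg_nonpos.2 hβ)
    _ = c * 4 ^ β * r ^ (-β) := by
        rw [Real.div_rpow (by linarith) (by norm_num), Real.rpow_neg (by norm_num : (0 : ℝ) ≤ 4),
          div_inv_eq_mul]
        ring

end MatchingRule

theorem le_abs_div_log_two_pow_mul (c : ℝ) {r s : ℝ} (hr : 2 ≤ r) (hs : 0 ≤ s) (k : ℕ) :
    c * s ≤ |c| / Real.log 2 ^ k * Real.log r ^ k * s := by
  have h_log : 0 < Real.log 2 := Real.log_pos one_lt_two
  rw [div_mul_eq_mul_div, mul_div_assoc, ← div_pow]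
  gcongr
  refine (le_abs_self c).trans (le_mul_of_one_le_right (abs_nonneg c) (one_le_pow₀ ?_))
  rw [one_le_div h_log]
  gcongr

open Filter Topology in
theorem statement0_general {d : ℕ} {P : Measure (Config d)} (hP : IsBernoulliHalfProduct P) {β : ℝ}
    (hβ : 0 < β) (hβd : β < d / 2) :
    ∃ (c : ℝ) (Φ : Config d → Site d → Site d), IsMatchingRule P Φ ∧ IsEquivariant P Φ ∧
      ∀ r : ℝ, 2 ≤ r → P {γ | r < ZΦ Φ γ} ≤ ENNReal.ofReal (c * r ^ (-β)) := by
  obtain rfl := hP.eq_fairCoins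
  have h_bigO := isBigO_real_mem_unpaired hβ hβd
  obtain ⟨c, -, hc⟩ := Asymptotics.bound_of_isBigO_nat_atTop h_bigO
  have h_tail (n : ℕ) := (le_abs_self _).trans (hc (x := n) (by positivity))
  simp only [Real.norm_of_nonneg (Real.rpow_nonneg (pow_nonneg zero_le_two _) _)] at h_tail
  have h_lim : Tendsto (fun n : ℕ => ((2 : ℝ) ^ n) ^ (-β)) atTop (𝓝 0) :=
    (tendsto_rpow_neg_atTop hβ).comp (tendsto_pow_atTop_atTop_of_one_lt one_lt_two)
  refine ⟨c * 4 ^ β, fun γ => partner γ (cellRel (runLength (2 * β)) γ),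
    ⟨measurable_partner measurableSet_cellRel, ?_⟩, fun z x => .of_forall fun γ =>
      partner_comp_sub z (cellRel_comp_sub γ z) x, fun r hr => ?_⟩
  · filter_upwards [ae_forall_exists_notMem_unpaired (h_bigO.trans_tendsto h_lim)] with γ hγ
    exact isMatching_partner hγ
  · rw [← ofReal_measureReal]
    exact ENNReal.ofReal_le_ofReal (real_lt_norm_partner_le hβ.le h_tail hr)

/-- For every `d ≥ 1` there exist `c = c(d) < ∞` and a translation-equivariant matching
rule `Φ` such that `ℙ(Z_Φ > r) ≤ c (log r)^4 r^{-2d/(d+4)}` for all `r ≥ 2`. -/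
theorem statement0 (d : ℕ) (hd : 1 ≤ d)
    (P : Measure (Config d)) (hP : IsBernoulliHalfProduct P) :
    ∃ (c : ℝ) (Φ : Config d → Site d → Site d),
      IsMatchingRule P Φ ∧ IsEquivariant P Φ ∧
        ∀ r : ℝ, 2 ≤ r →
          P {γ | r < ZΦ Φ γ} ≤
            ENNReal.ofReal (c * Real.log r ^ 4 * r ^ (-(2 * (d : ℝ) / ((d : ℝ) + 4)))) := by
  have hd' : (0 : ℝ) < d := mod_cast hd
  have hβd : 2 * (d : ℝ) / (d + 4) < d / 2 := by
    rw [div_lt_div_iff₀ (by positivity) two_pos]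
    nlinarith
  obtain ⟨c, Φ, h_rule, h_equivariant, h_tail⟩ := statement0_general hP (by positivity) hβd
  exact ⟨|c| / Real.log 2 ^ 4, Φ, h_rule, h_equivariant, fun r hr => (h_tail r hr).trans <|
    ENNReal.ofReal_le_ofReal (le_abs_div_log_two_pow_mul c hr (by positivity) 4)⟩

end
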